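/- arXiv:1910.06182 — 2 statements merged into one kernel-verified Lean document; each statement's English description precedes it below -/
import Mathlib

section
/- Let A be a simply-laced Cartan matrix of finite type (a_{ij} ∈ {0, −1} for i ≠ j), let w be a Weyl group element and ι = (i_1,…,i_k) a reduced word for w. Then for any finite sequence of 2-moves and 3-moves that transforms ι back into ι itself, the composition of the associated piecewise-linear maps is the identity map of ℤ^k. -/
/-!
STATEMENT 15: Let A be a simply-laced Cartan matrix of finite type, w a Weyl group
element and ι a reduced word for w. Then for any finite sequence of 2-moves and
3-moves that transforms ι back into ι itself, the composition of the associated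
piecewise-linear maps is the identity map of ℤ^k.
-/
/-- The simple reflection `s_i` of the Cartan matrix `a`, acting on the root
lattice (tensored with `ℚ`), `s_i(α_j) = α_j - a_{ij} α_i`. -/
def sRefl {n : ℕ} (a : Fin n → Fin n → ℤ) (i : Fin n) : (Fin n → ℚ) → (Fin n → ℚ) :=
  fun v => v - (∑ j, (a i j : ℚ) * v j) • (Pi.single i 1 : Fin n → ℚ)

/-- The product `s_{i_1} s_{i_2} ⋯ s_{i_k}` of simple reflections along a word. -/
def wProd {n : ℕ} (a : Fin n → Fin n → ℤ) (l : List (Fin n)) : (Fin n → ℚ) → (Fin n → ℚ) :=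
  (l.map (sRefl a)).foldr (· ∘ ·) id

/-- An `n×n` Cartan matrix of a finite-dimensional complex simple Lie algebra:
an indecomposable generalized Cartan matrix whose Weyl group is finite. -/
structure SimpleCartanMatrix (n : ℕ) where
  a : Fin n → Fin n → ℤ
  npos : 0 < n
  diag : ∀ i, a i i = 2
  offdiag_nonpos : ∀ i j, i ≠ j → a i j ≤ 0
  zero_symm : ∀ i j, a i j = 0 → a j i = 0
  indecomposable : ∀ S : Set (Fin n), (∀ i ∈ S, ∀ j, j ∉ S → a i j = 0) → S = ∅ ∨ S = Set.univ
  finiteWeyl : Set.Finite {w : (Fin n → ℚ) → (Fin n → ℚ) | ∃ l : List (Fin n), w = wProd a l}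

/-- A word is reduced if it has minimal length among all words representing the
same Weyl group element. -/
def IsReducedList {n : ℕ} (a : Fin n → Fin n → ℤ) (l : List (Fin n)) : Prop :=
  ∀ l' : List (Fin n), wProd a l' = wProd a l → l.length ≤ l'.length

/-- A 2-move or a 3-move, at a given position. -/
inductive BMove where
  | two (p : ℕ)
  | three (p : ℕ)

/-- The action of a move on words: a 2-move at `p` swaps the letters at
positions `p, p+1`; a 3-move at `p` turns the letters `(i,j,i)` at positions
`p, p+1, p+2` into `(j,i,j)`. -/
def moveWord {n k : ℕ} (w : Fin k → Fin n) : BMove → (Fin k → Fin n)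
  | .two p => fun q =>
      if h1 : (q : ℕ) = p ∧ p + 1 < k then w ⟨p + 1, h1.2⟩
      else if h2 : (q : ℕ) = p + 1 ∧ p < k then w ⟨p, h2.2⟩
      else w q
  | .three p => fun q =>
      if h1 : (q : ℕ) = p ∧ p + 1 < k then w ⟨p + 1, h1.2⟩
      else if h2 : (q : ℕ) = p + 1 ∧ p < k then w ⟨p, h2.2⟩
      else if h3 : (q : ℕ) = p + 2 ∧ p + 1 < k then w ⟨p + 1, h3.2⟩
      else w q

/-- The piecewise-linear map on `ℤ^k` associated with a move: a 2-move at `p`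
swaps the coordinates at positions `p, p+1`; a 3-move at `p` sends the
coordinates `(x,y,z)` at positions `p, p+1, p+2` to
`(max(z, y−x), x+z, min(x, y−z))`. -/
def moveZ {k : ℕ} (x : Fin k → ℤ) : BMove → (Fin k → ℤ)
  | .two p => fun q =>
      if h1 : (q : ℕ) = p ∧ p + 1 < k then x ⟨p + 1, h1.2⟩
      else if h2 : (q : ℕ) = p + 1 ∧ p < k then x ⟨p, h2.2⟩
      else x q
  | .three p =>
      if h : p + 2 < k then
        fun q =>
          if (q : ℕ) = p then
            max (x ⟨p + 2, h⟩) (x ⟨p + 1, by omega⟩ - x ⟨p, by omega⟩)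
          else if (q : ℕ) = p + 1 then x ⟨p, by omega⟩ + x ⟨p + 2, h⟩
          else if (q : ℕ) = p + 2 then
            min (x ⟨p, by omega⟩) (x ⟨p + 1, by omega⟩ - x ⟨p + 2, h⟩)
          else x q
      else x

/-- Applicability of a move to a word: a 2-move at `p` requires letters `i,j` at
positions `p, p+1` with `a_{ij} = a_{ji} = 0`; a 3-move at `p` requires letters
`(i,j,i)` at positions `p, p+1, p+2` with `a_{ij} = a_{ji} = -1`. -/
def ValidMove {n k : ℕ} (a : Fin n → Fin n → ℤ) (w : Fin k → Fin n) : BMove → Prop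
  | .two p => ∃ h : p + 1 < k,
      a (w ⟨p, by omega⟩) (w ⟨p + 1, h⟩) = 0 ∧ a (w ⟨p + 1, h⟩) (w ⟨p, by omega⟩) = 0
  | .three p => ∃ h : p + 2 < k,
      w ⟨p, by omega⟩ = w ⟨p + 2, h⟩ ∧
      a (w ⟨p, by omega⟩) (w ⟨p + 1, by omega⟩) = -1 ∧
      a (w ⟨p + 1, by omega⟩) (w ⟨p, by omega⟩) = -1

/-- A sequence of moves, each applicable to the word obtained so far. -/
inductive ValidSeq {n k : ℕ} (a : Fin n → Fin n → ℤ) :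
    (Fin k → Fin n) → List BMove → Prop
  | nil (w : Fin k → Fin n) : ValidSeq a w []
  | cons (w : Fin k → Fin n) (m : BMove) (ms : List BMove) :
      ValidMove a w m → ValidSeq a (moveWord w m) ms → ValidSeq a w (m :: ms)

/-- The word obtained after applying a sequence of moves. -/
def wordAfter {n k : ℕ} (w : Fin k → Fin n) (ms : List BMove) : Fin k → Fin n :=
  ms.foldl moveWord w

/-- The composition of the piecewise-linear maps associated with a sequence of
moves, applied to `x ∈ ℤ^k`. -/
def zAfter {k : ℕ} (x : Fin k → ℤ) (ms : List BMove) : Fin k → ℤ :=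
  ms.foldl moveZ x


namespace LoopId

open Finset

variable {n : ℕ}

/-- Simple root. -/
def al (i : Fin n) : Fin n → ℚ := Pi.single i 1

/-- The coroot functional. -/
def cor (a : Fin n → Fin n → ℤ) (i : Fin n) : (Fin n → ℚ) →ₗ[ℚ] ℚ where
  toFun v := ∑ j, (a i j : ℚ) * v j
  map_add' u v := by simp [mul_add, Finset.sum_add_distrib]
  map_smul' c v := by
    simp only [Pi.smul_apply, smul_eq_mul, RingHom.id_apply, Finset.mul_sum]
    exact Finset.sum_congr rfl fun _ _ => by ring

lemma sRefl_eq (a : Fin n → Fin n → ℤ) (i : Fin n) (v : Fin n → ℚ) :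
    sRefl a i v = v - cor a i v • al i := rfl

lemma cor_al (a : Fin n → Fin n → ℤ) (i j : Fin n) : cor a i (al j) = a i j := by
  simp [cor, al, Pi.single_apply]

/-- Linear version of the product along a word. -/
def WL (a : Fin n → Fin n → ℤ) : List (Fin n) → ((Fin n → ℚ) →ₗ[ℚ] (Fin n → ℚ))
  | [] => LinearMap.id
  | i :: l => (LinearMap.id - (cor a i).smulRight (al i)) ∘ₗ WL a l

lemma wProd_cons (a : Fin n → Fin n → ℤ) (i : Fin n) (l : List (Fin n)) :
    wProd a (i :: l) = sRefl a i ∘ wProd a l := rfl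

lemma wProd_eq_WL (a : Fin n → Fin n → ℤ) (l : List (Fin n)) : wProd a l = ⇑(WL a l) := by
  induction l with
  | nil => rfl
  | cons i l ih => rw [wProd_cons, ih]; rfl

lemma wProd_append (a : Fin n → Fin n → ℤ) (l l' : List (Fin n)) :
    wProd a (l ++ l') = wProd a l ∘ wProd a l' := by
  induction l with
  | nil => rfl
  | cons i l ih => rw [List.cons_append, wProd_cons, ih, wProd_cons]; rfl

/-- The inverse Weyl group element. -/
def winv (a : Fin n → Fin n → ℤ) (l : List (Fin n)) : (Fin n → ℚ) →ₗ[ℚ] (Fin n → ℚ) :=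
  WL a l.reverse

lemma sRefl_invol (C : SimpleCartanMatrix n) (i : Fin n) (v : Fin n → ℚ) :
    sRefl C.a i (sRefl C.a i v) = v := by
  simp only [sRefl_eq, map_sub, map_smul, cor_al, C.diag]
  ext k
  simp
  ring

lemma winv_cons (a : Fin n → Fin n → ℤ) (i : Fin n) (l : List (Fin n)) (v : Fin n → ℚ) :
    winv a (i :: l) v = winv a l (sRefl a i v) := by
  unfold winv
  rw [← wProd_eq_WL, ← wProd_eq_WL, List.reverse_cons, wProd_append]; rfl

lemma winv_wProd (C : SimpleCartanMatrix n) (l : List (Fin n)) (v : Fin n → ℚ) :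
    winv C.a l (wProd C.a l v) = v := by
  induction l with
  | nil => rfl
  | cons i l ih => rw [winv_cons, wProd_cons, Function.comp, sRefl_invol, ih]

lemma wProd_winv (C : SimpleCartanMatrix n) (l : List (Fin n)) (v : Fin n → ℚ) :
    wProd C.a l (winv C.a l v) = v := by
  induction l generalizing v with
  | nil => rfl
  | cons i l ih => rw [winv_cons, wProd_cons, Function.comp, ih, sRefl_invol]

lemma winv_congr (C : SimpleCartanMatrix n) {l l' : List (Fin n)}
    (h : wProd C.a l = wProd C.a l') : winv C.a l = winv C.a l' := by
  apply LinearMap.ext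
  intro v
  rw [← wProd_winv C l v, winv_wProd, h, winv_wProd]

lemma wProd_cancel (C : SimpleCartanMatrix n) {i : Fin n} {l l' : List (Fin n)} :
    wProd C.a (i :: l) = wProd C.a (i :: l') ↔ wProd C.a l = wProd C.a l' := by
  constructor
  · intro h
    funext v
    have := congrFun h v
    simp only [wProd_cons, Function.comp] at this
    rw [← sRefl_invol C i (wProd C.a l v), this, sRefl_invol]
  · intro h; rw [wProd_cons, wProd_cons, h]

lemma a_symm (C : SimpleCartanMatrix n)
    (hsl : ∀ i j, i ≠ j → C.a i j = 0 ∨ C.a i j = -1) (i j : Fin n) : C.a i j = C.a j i := by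
  by_cases h : i = j
  · rw [h]
  · have := hsl i j h
    have := hsl j i (Ne.symm h)
    have := C.zero_symm i j
    have := C.zero_symm j i
    omega

/-- Symmetric form. -/
def bf (a : Fin n → Fin n → ℤ) (u v : Fin n → ℚ) : ℚ := ∑ i, u i * cor a i v

lemma bf_symm (C : SimpleCartanMatrix n)
    (hsl : ∀ i j, i ≠ j → C.a i j = 0 ∨ C.a i j = -1) (u v : Fin n → ℚ) :
    bf C.a u v = bf C.a v u := by
  simp only [bf, cor, LinearMap.coe_mk, AddHom.coe_mk, Finset.mul_sum]
  rw [Finset.sum_comm]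
  refine Finset.sum_congr rfl fun i _ => Finset.sum_congr rfl fun j _ => ?_
  rw [a_symm C hsl i j]; ring

lemma bf_al (a : Fin n → Fin n → ℤ) (i : Fin n) (v : Fin n → ℚ) : bf a (al i) v = cor a i v := by
  simp [bf, al, Pi.single_apply]

lemma bf_add (a : Fin n → Fin n → ℤ) (u u' v : Fin n → ℚ) :
    bf a (u + u') v = bf a u v + bf a u' v := by
  simp [bf, add_mul, Finset.sum_add_distrib]

lemma bf_sub (a : Fin n → Fin n → ℤ) (u u' v : Fin n → ℚ) :
    bf a (u - u') v = bf a u v - bf a u' v := by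
  simp [bf, sub_mul, Finset.sum_sub_distrib]

lemma bf_smul (a : Fin n → Fin n → ℤ) (c : ℚ) (u v : Fin n → ℚ) :
    bf a (c • u) v = c * bf a u v := by
  simp [bf, Finset.mul_sum, mul_assoc]

lemma bf_sub_right (a : Fin n → Fin n → ℤ) (u v v' : Fin n → ℚ) :
    bf a u (v - v') = bf a u v - bf a u v' := by
  simp [bf, mul_sub, Finset.sum_sub_distrib]

lemma bf_refl (C : SimpleCartanMatrix n)
    (hsl : ∀ i j, i ≠ j → C.a i j = 0 ∨ C.a i j = -1) (i : Fin n) (v : Fin n → ℚ) :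
    bf C.a (sRefl C.a i v) (sRefl C.a i v) = bf C.a v v := by
  rw [sRefl_eq, bf_sub, bf_sub_right, bf_smul, bf_al, bf_symm C hsl v (cor C.a i v • al i),
    bf_smul, bf_al, map_sub, map_smul, cor_al, C.diag]
  simp
  ring

/-- Averaged form. -/
lemma exists_avg (C : SimpleCartanMatrix n) : ∃ B : (Fin n → ℚ) → (Fin n → ℚ) → ℚ,
    (∀ u u' v, B (u + u') v = B u v + B u' v) ∧ (∀ (c : ℚ) u v, B (c • u) v = c * B u v) ∧
    (∀ u v, B u v = B v u) ∧ (∀ i u v, B (sRefl C.a i u) (sRefl C.a i v) = B u v) ∧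
    (∀ u, u ≠ 0 → 0 < B u u) := by
  classical
  have hfin := C.finiteWeyl
  set T := hfin.toFinset with hT
  have hmem : ∀ g, g ∈ T ↔ ∃ l : List (Fin n), g = wProd C.a l := by
    intro g; simp [hT]
  refine ⟨fun u v => ∑ g ∈ T, ∑ k, g u k * g v k, ?_, ?_, ?_, ?_, ?_⟩
  · intro u u' v
    rw [← Finset.sum_add_distrib]
    refine Finset.sum_congr rfl fun g hg => ?_
    obtain ⟨l, rfl⟩ := (hmem g).1 hg
    simp [wProd_eq_WL, add_mul, Finset.sum_add_distrib]
  · intro c u v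
    rw [Finset.mul_sum]
    refine Finset.sum_congr rfl fun g hg => ?_
    obtain ⟨l, rfl⟩ := (hmem g).1 hg
    simp [wProd_eq_WL, Finset.mul_sum, mul_assoc]
  · intro u v
    exact Finset.sum_congr rfl fun g hg => Finset.sum_congr rfl fun k _ => mul_comm _ _
  · intro i u v
    have hm : ∀ g ∈ T, g ∘ sRefl C.a i ∈ T := by
      intro g hg
      obtain ⟨l, rfl⟩ := (hmem g).1 hg
      refine (hmem _).2 ⟨l ++ [i], ?_⟩
      rw [wProd_append]; rfl
    have hi : ∀ g : (Fin n → ℚ) → (Fin n → ℚ), (g ∘ sRefl C.a i) ∘ sRefl C.a i = g := by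
      intro g; funext v; simp [sRefl_invol]
    refine Finset.sum_bij' (fun g _ => g ∘ sRefl C.a i) (fun g _ => g ∘ sRefl C.a i) hm hm
      (fun g _ => hi g) (fun g _ => hi g) ?_
    intro g hg
    rfl
  · intro u hu
    refine Finset.sum_pos' (fun g _ => Finset.sum_nonneg fun k _ => mul_self_nonneg _) ?_
    refine ⟨wProd C.a [], (hmem _).2 ⟨[], rfl⟩, ?_⟩
    obtain ⟨k, hk⟩ := Function.ne_iff.1 hu
    exact Finset.sum_pos' (fun k _ => mul_self_nonneg _)
      ⟨k, Finset.mem_univ _, mul_self_pos.2 hk⟩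

lemma al_ne (i : Fin n) : al i ≠ 0 := by simp [al]

lemma bf_pos (C : SimpleCartanMatrix n)
    (hsl : ∀ i j, i ≠ j → C.a i j = 0 ∨ C.a i j = -1) (u : Fin n → ℚ) (hu : u ≠ 0) :
    0 < bf C.a u u := by
  obtain ⟨B, hadd, hsmul, hsymm, hinv, hpos⟩ := exists_avg C
  have hadd' : ∀ u v v', B u (v + v') = B u v + B u v' := by
    intro u v v'; rw [hsymm, hadd, hsymm v, hsymm v']
  have hsmul' : ∀ (c : ℚ) u v, B u (c • v) = c * B u v := by
    intro c u v; rw [hsymm, hsmul, hsymm v]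
  have hal : ∀ i v, B (al i) v = cor C.a i v / 2 * B (al i) (al i) := by
    intro i v
    have h := hinv i (al i) v
    have h1 : sRefl C.a i (al i) = (-1 : ℚ) • al i := by
      rw [sRefl_eq, cor_al, C.diag]; ext k; simp; ring
    have h2 : sRefl C.a i v = v + (-cor C.a i v) • al i := by
      rw [sRefl_eq]; ext k; simp; ring
    rw [h1, h2, hsmul, hadd', hsmul'] at h
    linarith
  have hc : ∀ i j, C.a i j ≠ 0 → B (al i) (al i) = B (al j) (al j) := by
    intro i j hij
    have h1 := hal i (al j)
    have h2 := hal j (al i)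
    rw [hsymm, h2, cor_al, cor_al, a_symm C hsl j i] at h1
    have : (C.a i j : ℚ) / 2 ≠ 0 := by
      have : (C.a i j : ℚ) ≠ 0 := by exact_mod_cast hij
      positivity
    exact (mul_left_cancel₀ this h1).symm
  obtain ⟨c, hcpos, hconst⟩ : ∃ c : ℚ, 0 < c ∧ ∀ i, B (al i) (al i) = c := by
    let i0 : Fin n := ⟨0, C.npos⟩
    refine ⟨B (al i0) (al i0), hpos _ (al_ne _), ?_⟩
    rcases C.indecomposable {i | B (al i) (al i) = B (al i0) (al i0)} (by
      intro i hi j hj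
      by_contra h
      exact hj ((hc i j h).symm.trans hi)) with h | h
    · have : i0 ∈ ({i | B (al i) (al i) = B (al i0) (al i0)} : Set (Fin n)) := rfl
      rw [h] at this; exact this.elim
    · intro i
      have : i ∈ ({i | B (al i) (al i) = B (al i0) (al i0)} : Set (Fin n)) := by rw [h]; trivial
      exact this
  have hB : B u u = c / 2 * bf C.a u u := by
    let f : (Fin n → ℚ) →ₗ[ℚ] ℚ :=
      { toFun := fun x => B x u, map_add' := fun x y => hadd x y u,
        map_smul' := fun c x => hsmul c x u }
    have h1 : B u u = f u := rfl
    have h2 : u = ∑ i, u i • al i := by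
      simpa [al] using (pi_eq_sum_univ' u)
    have h3 : f u = ∑ i, u i * f (al i) := by
      conv_lhs => rw [h2]
      rw [map_sum]; simp
    rw [h1, h3, bf, Finset.mul_sum]
    refine Finset.sum_congr rfl fun i _ => ?_
    have : f (al i) = cor C.a i u / 2 * c := by
      rw [← hconst i]; exact hal i u
    rw [this]; ring
  have := hpos u hu
  rw [hB] at this
  by_contra hcon
  nlinarith

lemma no_triangle (C : SimpleCartanMatrix n)
    (hsl : ∀ i j, i ≠ j → C.a i j = 0 ∨ C.a i j = -1) (i j l : Fin n) (hij : C.a i j = -1)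
    (hjl : C.a j l = -1) (hil : C.a i l = -1) : False := by
  have h1 : al i + al j + al l ≠ 0 := by
    intro h
    have := congrFun h i
    simp only [al, Pi.add_apply, Pi.single_apply, Pi.zero_apply, if_true] at this
    split_ifs at this <;> norm_num at this
  have := bf_pos C hsl _ h1
  simp only [bf_add, bf_al, map_add, cor_al, C.diag, hij, hjl, hil, a_symm C hsl j i,
    a_symm C hsl l i, a_symm C hsl l j] at this
  norm_num at this

/-- Roots. -/
def IsRt (a : Fin n → Fin n → ℤ) (v : Fin n → ℚ) : Prop :=
  (∃ z : Fin n → ℤ, v = fun i => (z i : ℚ)) ∧ bf a v v = 2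

lemma isRt_al (C : SimpleCartanMatrix n) (i : Fin n) : IsRt C.a (al i) := by
  refine ⟨⟨Pi.single i 1, ?_⟩, ?_⟩
  · ext k; simp [al, Pi.single_apply]
  · rw [bf_al, cor_al, C.diag]; norm_num

lemma isRt_refl (C : SimpleCartanMatrix n)
    (hsl : ∀ i j, i ≠ j → C.a i j = 0 ∨ C.a i j = -1) (i : Fin n) {v : Fin n → ℚ}
    (h : IsRt C.a v) : IsRt C.a (sRefl C.a i v) := by
  obtain ⟨⟨z, rfl⟩, h2⟩ := h
  refine ⟨⟨z - (∑ j, C.a i j * z j) • Pi.single i 1, ?_⟩, by rw [bf_refl C hsl, h2]⟩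
  ext k
  simp [sRefl, Pi.single_apply]

lemma bf_even (C : SimpleCartanMatrix n)
    (hsl : ∀ i j, i ≠ j → C.a i j = 0 ∨ C.a i j = -1) (z : Fin n → ℤ) :
    ∃ m : ℤ, bf C.a (fun i => (z i : ℚ)) (fun i => (z i : ℚ)) = 2 * m := by
  have h : ((∑ p : Fin n × Fin n, C.a p.1 p.2 * z p.1 * z p.2 : ℤ) : ZMod 2) = 0 := by
    push_cast
    refine Finset.sum_involution (fun p _ => (p.2, p.1)) ?_ ?_ ?_ ?_
    · intro p _
      simp only
      rw [a_symm C hsl p.2 p.1]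
      have : ∀ x y z : ZMod 2, x * y * z + x * z * y = 0 := by decide
      exact this _ _ _
    · intro p _ hp heq
      apply hp
      have : p.1 = p.2 := by
        have := congrArg Prod.snd heq
        exact this
      rw [this, C.diag]
      have : ((2 : ℤ) : ZMod 2) = 0 := by decide
      rw [this]; simp
    · intros; simp
    · intros; rfl
  rw [ZMod.intCast_zmod_eq_zero_iff_dvd] at h
  obtain ⟨m, hm⟩ := h
  refine ⟨m, ?_⟩
  have : bf C.a (fun i => (z i : ℚ)) (fun i => (z i : ℚ)) =
      ((∑ p : Fin n × Fin n, C.a p.1 p.2 * z p.1 * z p.2 : ℤ) : ℚ) := by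
    rw [Fintype.sum_prod_type]
    simp only [bf, cor, LinearMap.coe_mk, AddHom.coe_mk, Finset.mul_sum]
    push_cast
    exact Finset.sum_congr rfl fun i _ => Finset.sum_congr rfl fun j _ => by ring
  rw [this, hm]; push_cast; ring

lemma rt_sign (C : SimpleCartanMatrix n)
    (hsl : ∀ i j, i ≠ j → C.a i j = 0 ∨ C.a i j = -1) {v : Fin n → ℚ}
    (h : IsRt C.a v) : (∀ k, 0 ≤ v k) ∨ (∀ k, v k ≤ 0) := by
  obtain ⟨⟨z, rfl⟩, h2⟩ := h
  by_contra hcon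
  push Not at hcon
  obtain ⟨⟨k, hk⟩, ⟨m, hm⟩⟩ := hcon
  have hk' : z k < 0 := by exact_mod_cast hk
  have hm' : 0 < z m := by exact_mod_cast hm
  let zp : Fin n → ℤ := fun i => max (z i) 0
  let zm : Fin n → ℤ := fun i => max (- z i) 0
  let p : Fin n → ℚ := fun i => (zp i : ℚ)
  let q : Fin n → ℚ := fun i => (zm i : ℚ)
  have hp : p ≠ 0 := by
    intro h
    have h : ((zp m : ℤ) : ℚ) = 0 := congrFun h m
    have : zp m = 0 := by exact_mod_cast h
    simp only [zp] at this; omega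
  have hq : q ≠ 0 := by
    intro h
    have h : ((zm k : ℤ) : ℚ) = 0 := congrFun h k
    have : zm k = 0 := by exact_mod_cast h
    simp only [zm] at this; omega
  have hv : (fun i => (z i : ℚ)) = p - q := by
    ext i
    have : z i = zp i - zm i := by simp only [zp, zm]; omega
    simp only [p, q, Pi.sub_apply]
    exact_mod_cast this
  have hpq : bf C.a p q ≤ 0 := by
    simp only [bf, cor, LinearMap.coe_mk, AddHom.coe_mk, Finset.mul_sum]
    refine Finset.sum_nonpos fun i _ => Finset.sum_nonpos fun j _ => ?_
    have : zp i * (C.a i j * zm j) ≤ 0 := by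
      by_cases hij : i = j
      · subst hij
        have : zp i * zm i = 0 := by
          simp only [zp, zm]
          rcases le_total (z i) 0 with h | h
          · rw [max_eq_right h]; simp
          · rw [max_eq_right (a := -z i) (by omega)]; simp
        have : zp i * (C.a i i * zm i) = C.a i i * (zp i * zm i) := by ring
        rw [this, ‹zp i * zm i = 0›]; simp
      · have h1 := C.offdiag_nonpos i j hij
        have h2 : 0 ≤ zp i := le_max_right _ _
        have h3 : 0 ≤ zm j := le_max_right _ _
        have := mul_nonneg h2 h3
        nlinarith
    simp only [p, q]
    exact_mod_cast this
  have e1 := bf_pos C hsl p hp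
  have e2 := bf_pos C hsl q hq
  obtain ⟨m1, h1⟩ := bf_even C hsl zp
  obtain ⟨m2, h3⟩ := bf_even C hsl zm
  change bf C.a p p = _ at h1
  change bf C.a q q = _ at h3
  have g1 : (1 : ℚ) ≤ m1 := by
    have : (0 : ℚ) < m1 := by linarith
    exact_mod_cast (show (0 : ℤ) < m1 by exact_mod_cast this)
  have g2 : (1 : ℚ) ≤ m2 := by
    have : (0 : ℚ) < m2 := by linarith
    exact_mod_cast (show (0 : ℤ) < m2 by exact_mod_cast this)
  rw [hv, bf_sub, bf_sub_right, bf_sub_right, bf_symm C hsl q p] at h2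
  linarith

/-- A positive root made negative by a simple reflection is the simple root. -/
lemma rt_simple (C : SimpleCartanMatrix n)
    (hsl : ∀ i j, i ≠ j → C.a i j = 0 ∨ C.a i j = -1) {v : Fin n → ℚ} {i : Fin n}
    (h : IsRt C.a v) (hp : ∀ k, 0 ≤ v k) (hn : ∀ k, sRefl C.a i v k ≤ 0) : v = al i := by
  have hv : v = v i • al i := by
    ext k
    by_cases hk : k = i
    · subst hk; simp [al]
    · have h1 := hn k
      have h2 := hp k
      have h3 : sRefl C.a i v k = v k := by simp [sRefl, hk]
      simp [al, hk]; linarith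
  have h2 := h.2
  rw [hv, bf_smul, bf_symm C hsl, bf_smul, bf_al, cor_al, C.diag] at h2
  have h0 := hp i
  have : (v i - 1) * (v i + 1) = 0 := by
    simp at h2; linarith
  rcases mul_eq_zero.1 this with h | h
  · have : v i = 1 := by linarith
    rw [hv, this, one_smul]
  · linarith

lemma not_neg_al (i : Fin n) : ¬ ∀ k, al i k ≤ 0 := by
  intro h
  have := h i
  simp [al] at this
  linarith

/-- Exchange. -/
lemma exchange (C : SimpleCartanMatrix n)
    (hsl : ∀ i j, i ≠ j → C.a i j = 0 ∨ C.a i j = -1) (l : List (Fin n)) :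
    ∀ v, IsRt C.a v → (∀ k, 0 ≤ v k) → (∀ k, winv C.a l v k ≤ 0) →
    ∃ l', l'.length + 1 = l.length ∧
      ∀ u, wProd C.a l u = wProd C.a l' u - bf C.a v (wProd C.a l' u) • v := by
  induction l with
  | nil =>
    intro v hv hp hn
    exfalso
    have : v = 0 := by
      ext k; exact le_antisymm (hn k) (hp k)
    have h2 := hv.2
    rw [this] at h2
    simp [bf] at h2
  | cons i l ih =>
    intro v hv hp hn
    simp only [winv_cons] at hn
    rcases rt_sign C hsl (isRt_refl C hsl i hv) with h | h
    · obtain ⟨l', hl, hu⟩ := ih _ (isRt_refl C hsl i hv) h hn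
      refine ⟨i :: l', by simp [hl], ?_⟩
      intro u
      simp only [wProd_cons, Function.comp]
      rw [hu]
      generalize wProd C.a l' u = x
      have hb : bf C.a v (sRefl C.a i x) = bf C.a (sRefl C.a i v) x := by
        rw [sRefl_eq, sRefl_eq, bf_sub_right, bf_sub, bf_smul, bf_al,
          bf_symm C hsl v (cor C.a i x • al i), bf_smul, bf_al]
        ring
      rw [hb]
      generalize bf C.a (sRefl C.a i v) x = c
      have : sRefl C.a i (x - c • sRefl C.a i v) = sRefl C.a i x - c • sRefl C.a i (sRefl C.a i v) := by
        rw [sRefl_eq, sRefl_eq C.a i x, sRefl_eq C.a i (sRefl C.a i v), map_sub, map_smul]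
        ext k; simp; ring
      rw [this, sRefl_invol]
    · have := rt_simple C hsl hv hp h
      subst this
      refine ⟨l, by simp, ?_⟩
      intro u
      simp only [wProd_cons, Function.comp, bf_al]
      rfl

/-- Left descent. -/
def Desc (a : Fin n → Fin n → ℤ) (l : List (Fin n)) (v : Fin n → ℚ) : Prop :=
  ∀ k, winv a l v k ≤ 0

lemma isRt_winv (C : SimpleCartanMatrix n)
    (hsl : ∀ i j, i ≠ j → C.a i j = 0 ∨ C.a i j = -1) (l : List (Fin n)) {v : Fin n → ℚ}
    (h : IsRt C.a v) : IsRt C.a (winv C.a l v) := by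
  induction l generalizing v with
  | nil => exact h
  | cons i l ih => rw [winv_cons]; exact ih (isRt_refl C hsl i h)

lemma desc_exists (C : SimpleCartanMatrix n)
    (hsl : ∀ i j, i ≠ j → C.a i j = 0 ∨ C.a i j = -1) {l : List (Fin n)} {i : Fin n}
    (h : Desc C.a l (al i)) :
    ∃ l', l'.length + 1 = l.length ∧ wProd C.a (i :: l') = wProd C.a l := by
  obtain ⟨l', h1, h2⟩ := exchange C hsl l (al i) (isRt_al C i)
    (by intro k; simp only [al, Pi.single_apply]; split_ifs <;> norm_num) h
  refine ⟨l', h1, ?_⟩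
  funext u
  rw [h2, bf_al]; rfl

lemma red_tail (C : SimpleCartanMatrix n) {i : Fin n} {l : List (Fin n)}
    (h : IsReducedList C.a (i :: l)) : IsReducedList C.a l := by
  intro l' hl
  have := h (i :: l') ((wProd_cancel C).2 hl)
  simpa using this

lemma desc_head (C : SimpleCartanMatrix n)
    (hsl : ∀ i j, i ≠ j → C.a i j = 0 ∨ C.a i j = -1) {l : List (Fin n)} {i : Fin n}
    (h : IsReducedList C.a (i :: l)) : Desc C.a (i :: l) (al i) := by
  rcases rt_sign C hsl (isRt_winv C hsl (i :: l) (isRt_al C i)) with h1 | h1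
  · exfalso
    have h2 : sRefl C.a i (al i) = - al i := by
      rw [sRefl_eq, cor_al, C.diag]; ext k; simp; ring
    have h3 : Desc C.a l (al i) := by
      intro k
      have := h1 k
      rw [winv_cons, h2, map_neg] at this
      simpa using this
    obtain ⟨l', h4, h5⟩ := desc_exists C hsl h3
    have := h l' (by
      rw [wProd_cons, ← h5, wProd_cons]
      funext u; simp [sRefl_invol])
    simp at this
    omega
  · exact h1

lemma desc_congr (C : SimpleCartanMatrix n) {l l' : List (Fin n)} {v : Fin n → ℚ}
    (h : wProd C.a l = wProd C.a l') (hd : Desc C.a l v) : Desc C.a l' v := by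
  unfold Desc; rw [← winv_congr C h]; exact hd

/-- The root condition for a word to be a prefix. -/
def Pre (a : Fin n → Fin n → ℤ) (l : List (Fin n)) : List (Fin n) → Prop
  | [] => True
  | i :: c => Desc a l (al i) ∧ ∀ l', wProd a (i :: l') = wProd a l → Pre a l' c

lemma pre_exists (C : SimpleCartanMatrix n)
    (hsl : ∀ i j, i ≠ j → C.a i j = 0 ∨ C.a i j = -1) (c : List (Fin n)) :
    ∀ l : List (Fin n), Pre C.a l c →
    ∃ r, (c ++ r).length = l.length ∧ wProd C.a (c ++ r) = wProd C.a l := by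
  induction c with
  | nil => intro l _; exact ⟨l, rfl, rfl⟩
  | cons i c ih =>
    intro l h
    obtain ⟨h1, h2⟩ := h
    obtain ⟨l', h3, h4⟩ := desc_exists C hsl h1
    obtain ⟨r, h5, h6⟩ := ih l' (h2 l' h4)
    refine ⟨r, by rw [List.cons_append, List.length_cons, h5, h3], ?_⟩
    rw [← h4, List.cons_append, wProd_cancel, h6]

lemma desc_cons (C : SimpleCartanMatrix n) {i : Fin n} {l l' : List (Fin n)} {v : Fin n → ℚ}
    (h : wProd C.a (i :: l') = wProd C.a l) (hd : Desc C.a l (sRefl C.a i v)) :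
    Desc C.a l' v := by
  intro k
  have := hd k
  rwa [← winv_congr C h, winv_cons, sRefl_invol] at this

lemma desc_add {a : Fin n → Fin n → ℤ} {l : List (Fin n)} {u v : Fin n → ℚ}
    (h : Desc a l u) (h' : Desc a l v) : Desc a l (u + v) := by
  intro k
  rw [map_add]
  have := h k
  have := h' k
  simp only [Pi.add_apply]; linarith

lemma sRefl_add (a : Fin n → Fin n → ℤ) (i : Fin n) (u v : Fin n → ℚ) :
    sRefl a i (u + v) = sRefl a i u + sRefl a i v := by
  simp only [sRefl_eq, map_add]; ext k; simp; ring

lemma sRefl_zero {a : Fin n → Fin n → ℤ} {i j : Fin n} (h : a i j = 0) :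
    sRefl a i (al j) = al j := by
  rw [sRefl_eq, cor_al, h]; simp

lemma sRefl_one {a : Fin n → Fin n → ℤ} {i j : Fin n} (h : a i j = -1) :
    sRefl a i (al j) = al i + al j := by
  rw [sRefl_eq, cor_al, h]; ext k; simp; ring

lemma sRefl_sum {a : Fin n → Fin n → ℤ} {i j : Fin n} (h2 : a i i = 2) (h : a i j = -1) :
    sRefl a i (al i + al j) = al j := by
  rw [sRefl_add, sRefl_eq, sRefl_eq, cor_al, cor_al, h, h2]; ext k; simp; ring

lemma pre2 (C : SimpleCartanMatrix n) {i j : Fin n} {l : List (Fin n)}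
    (hij : C.a i j = 0) (hi : Desc C.a l (al i)) (hj : Desc C.a l (al j)) :
    Pre C.a l [i, j] := by
  refine ⟨hi, fun l1 h1 => ⟨?_, fun _ _ => trivial⟩⟩
  apply desc_cons C h1; rw [sRefl_zero hij]; exact hj

lemma pre3 (C : SimpleCartanMatrix n) {i j : Fin n} {l : List (Fin n)}
    (hij : C.a i j = -1) (hji : C.a j i = -1)
    (hi : Desc C.a l (al i)) (hj : Desc C.a l (al j)) :
    Pre C.a l [i, j, i] := by
  refine ⟨hi, fun l1 h1 => ⟨?_, fun l2 h2 => ⟨?_, fun _ _ => trivial⟩⟩⟩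
  · apply desc_cons C h1; rw [sRefl_one hij]; exact desc_add hi hj
  · apply desc_cons C h2; apply desc_cons C h1
    rw [sRefl_one hji, add_comm, sRefl_sum (C.diag i) hij]; exact hj

end LoopId

namespace LoopId

set_option linter.unusedSimpArgs false

variable {n : ℕ}

lemma pre111 (C : SimpleCartanMatrix n) {i j m : Fin n} {l : List (Fin n)}
    (hij : C.a i j = 0) (him : C.a i m = 0) (hjm : C.a j m = 0)
    (hi : Desc C.a l (al i)) (hj : Desc C.a l (al j)) (hm : Desc C.a l (al m)) :
    Pre C.a l [i, j, m] := by
  refine ⟨hi, fun l1 h1 => ⟨?_, fun l2 h2 => ⟨?_, fun _ _ => trivial⟩⟩⟩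
  · apply desc_cons C h1; rw [sRefl_zero hij]; exact hj
  · apply desc_cons C h2; apply desc_cons C h1
    rw [sRefl_zero hjm, sRefl_zero him]; exact hm

lemma pre21 (C : SimpleCartanMatrix n) {i j m : Fin n} {l : List (Fin n)}
    (hij : C.a i j = -1) (hji : C.a j i = -1) (him : C.a i m = 0) (hjm : C.a j m = 0)
    (hi : Desc C.a l (al i)) (hj : Desc C.a l (al j)) (hm : Desc C.a l (al m)) :
    Pre C.a l [i, j, i, m] := by
  refine ⟨hi, fun l1 h1 => ⟨?_, fun l2 h2 => ⟨?_, fun l3 h3 => ⟨?_, fun _ _ => trivial⟩⟩⟩⟩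
  · apply desc_cons C h1; rw [sRefl_one hij]; exact desc_add hi hj
  · apply desc_cons C h2; apply desc_cons C h1
    rw [sRefl_one hji, add_comm, sRefl_sum (C.diag i) hij]; exact hj
  · apply desc_cons C h3; apply desc_cons C h2; apply desc_cons C h1
    rw [sRefl_zero him, sRefl_zero hjm, sRefl_zero him]; exact hm

lemma preA3 (C : SimpleCartanMatrix n) {i j m : Fin n} {l : List (Fin n)}
    (hij : C.a i j = -1) (hji : C.a j i = -1) (him : C.a i m = 0) (hmi : C.a m i = 0)
    (hjm : C.a j m = -1) (hmj : C.a m j = -1)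
    (hi : Desc C.a l (al i)) (hj : Desc C.a l (al j)) (hm : Desc C.a l (al m)) :
    Pre C.a l [i, j, i, m, j, i] := by
  refine ⟨hi, fun l1 h1 => ⟨?_, fun l2 h2 => ⟨?_, fun l3 h3 => ⟨?_, fun l4 h4 =>
    ⟨?_, fun l5 h5 => ⟨?_, fun _ _ => trivial⟩⟩⟩⟩⟩⟩
  · apply desc_cons C h1; rw [sRefl_one hij]; exact desc_add hi hj
  · apply desc_cons C h2; apply desc_cons C h1
    rw [sRefl_one hji, add_comm, sRefl_sum (C.diag i) hij]; exact hj
  · apply desc_cons C h3; apply desc_cons C h2; apply desc_cons C h1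
    have : sRefl C.a i (sRefl C.a j (sRefl C.a i (al m))) = al i + al j + al m := by
      simp only [sRefl_eq, map_add, map_sub, map_smul, cor_al, hij, hji, him, hmi, hjm, hmj,
        C.diag, smul_eq_mul]
      push_cast; module
    rw [this]; exact desc_add (desc_add hi hj) hm
  · apply desc_cons C h4; apply desc_cons C h3; apply desc_cons C h2; apply desc_cons C h1
    have : sRefl C.a i (sRefl C.a j (sRefl C.a i (sRefl C.a m (al j)))) = al j + al m := by
      simp only [sRefl_eq, map_add, map_sub, map_smul, cor_al, hij, hji, him, hmi, hjm, hmj,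
        C.diag, smul_eq_mul]
      push_cast; module
    rw [this]; exact desc_add hj hm
  · apply desc_cons C h5; apply desc_cons C h4; apply desc_cons C h3; apply desc_cons C h2
    apply desc_cons C h1
    have : sRefl C.a i (sRefl C.a j (sRefl C.a i (sRefl C.a m (sRefl C.a j (al i))))) = al m := by
      simp only [sRefl_eq, map_add, map_sub, map_smul, cor_al, hij, hji, him, hmi, hjm, hmj,
        C.diag, smul_eq_mul]
      push_cast; module
    rw [this]; exact hm

/-- Labelled words. -/
abbrev LW (n : ℕ) := List (Fin n × ℤ)

/-- The word of a labelled word. -/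
def wd (P : LW n) : List (Fin n) := P.map Prod.fst

/-- A move at the head, from first letter `i` to first letter `j`. -/
inductive Hd (a : Fin n → Fin n → ℤ) (i j : Fin n) : LW n → LW n → Prop
  | two (x y : ℤ) (v : LW n) : a i j = 0 → a j i = 0 →
      Hd a i j ((i, x) :: (j, y) :: v) ((j, y) :: (i, x) :: v)
  | three (x y z : ℤ) (v : LW n) : a i j = -1 → a j i = -1 →
      Hd a i j ((i, x) :: (j, y) :: (i, z) :: v)
        ((j, max z (y - x)) :: (i, x + z) :: (j, min x (y - z)) :: v)

/-- A move anywhere. -/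
inductive St (a : Fin n → Fin n → ℤ) : LW n → LW n → Prop
  | head (i j : Fin n) (P Q : LW n) : Hd a i j P Q → St a P Q
  | cons (p : Fin n × ℤ) (P Q : LW n) : St a P Q → St a (p :: P) (p :: Q)

/-- Connectedness by moves. -/
def Cn (a : Fin n → Fin n → ℤ) : LW n → LW n → Prop := Relation.ReflTransGen (St a)

/-- Connectedness by moves fixing the first entry. -/
def Ceq (a : Fin n → Fin n → ℤ) (P Q : LW n) : Prop :=
  ∃ p P' Q', P = p :: P' ∧ Q = p :: Q' ∧ Cn a P' Q'

variable {a : Fin n → Fin n → ℤ}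

lemma Hd.symm {i j : Fin n} {P Q : LW n} (h : Hd a i j P Q) : Hd a j i Q P := by
  cases h with
  | two x y v h1 h2 => exact Hd.two _ _ _ h2 h1
  | three x y z v h1 h2 =>
    have := Hd.three (a := a) (max z (y - x)) (x + z) (min x (y - z)) v h2 h1
    convert this using 4
    · omega
    · omega
    · congr 2; omega

lemma St.symm {P Q : LW n} (h : St a P Q) : St a Q P := by
  induction h with
  | head i j P Q h => exact St.head _ _ _ _ h.symm
  | cons p P Q _ ih => exact St.cons _ _ _ ih

lemma Cn.refl (P : LW n) : Cn a P P := Relation.ReflTransGen.refl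

lemma Cn.symm {P Q : LW n} (h : Cn a P Q) : Cn a Q P := by
  induction h with
  | refl => exact Relation.ReflTransGen.refl
  | tail _ h ih => exact Relation.ReflTransGen.head h.symm ih

lemma Cn.trans {P Q R : LW n} (h : Cn a P Q) (h' : Cn a Q R) : Cn a P R :=
  Relation.ReflTransGen.trans h h'

lemma Cn.cons {P Q : LW n} (p : Fin n × ℤ) (h : Cn a P Q) : Cn a (p :: P) (p :: Q) := by
  induction h with
  | refl => exact Relation.ReflTransGen.refl
  | tail _ h ih => exact Relation.ReflTransGen.tail ih (St.cons p _ _ h)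

lemma Cn.hd {i j : Fin n} {P Q : LW n} (h : Hd a i j P Q) : Cn a P Q :=
  Relation.ReflTransGen.single (St.head _ _ _ _ h)

lemma Ceq.symm {P Q : LW n} (h : Ceq a P Q) : Ceq a Q P := by
  obtain ⟨p, P', Q', rfl, rfl, h⟩ := h
  exact ⟨p, _, _, rfl, rfl, h.symm⟩

lemma Ceq.trans {P Q R : LW n} (h : Ceq a P Q) (h' : Ceq a Q R) : Ceq a P R := by
  obtain ⟨p, P', Q', rfl, rfl, h⟩ := h
  obtain ⟨q, Q'', R', h1, rfl, h'⟩ := h'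
  injection h1 with h1 h2
  subst h1; subst h2
  exact ⟨p, _, _, rfl, rfl, h.trans h'⟩

lemma Ceq.cn {P Q : LW n} (h : Ceq a P Q) : Cn a P Q := by
  obtain ⟨p, P', Q', rfl, rfl, h⟩ := h
  exact h.cons p

lemma Ceq.mk' {P Q : LW n} (p : Fin n × ℤ) (h : Cn a P Q) : Ceq a (p :: P) (p :: Q) :=
  ⟨p, _, _, rfl, rfl, h⟩

lemma wProd_two (C : SimpleCartanMatrix n) {i j : Fin n} (h : C.a i j = 0) (h' : C.a j i = 0)
    (l : List (Fin n)) : wProd C.a (i :: j :: l) = wProd C.a (j :: i :: l) := by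
  funext u
  simp only [wProd_cons, Function.comp]
  generalize wProd C.a l u = v
  simp only [sRefl_eq, map_sub, map_smul, cor_al, h, h', smul_eq_mul]
  push_cast; module

lemma wProd_three (C : SimpleCartanMatrix n) {i j : Fin n} (h : C.a i j = -1)
    (h' : C.a j i = -1) (l : List (Fin n)) :
    wProd C.a (i :: j :: i :: l) = wProd C.a (j :: i :: j :: l) := by
  funext u
  simp only [wProd_cons, Function.comp]
  generalize wProd C.a l u = v
  simp only [sRefl_eq, map_sub, map_smul, cor_al, h, h', C.diag, smul_eq_mul]
  push_cast; module

lemma hd_wd (C : SimpleCartanMatrix n) {i j : Fin n} {P Q : LW n} (h : Hd C.a i j P Q) :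
    wProd C.a (wd P) = wProd C.a (wd Q) ∧ P.length = Q.length := by
  cases h with
  | two x y v h1 h2 => exact ⟨by simpa [wd] using wProd_two C h1 h2 _, by simp⟩
  | three x y z v h1 h2 => exact ⟨by simpa [wd] using wProd_three C h1 h2 _, by simp⟩

lemma st_wd (C : SimpleCartanMatrix n) {P Q : LW n} (h : St C.a P Q) :
    wProd C.a (wd P) = wProd C.a (wd Q) ∧ P.length = Q.length := by
  induction h with
  | head i j P Q h => exact hd_wd C h
  | cons p P Q _ ih =>
    exact ⟨(wProd_cancel C).2 ih.1, by simp [ih.2]⟩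

lemma cn_wd (C : SimpleCartanMatrix n) {P Q : LW n} (h : Cn C.a P Q) :
    wProd C.a (wd P) = wProd C.a (wd Q) ∧ P.length = Q.length := by
  induction h with
  | refl => exact ⟨rfl, rfl⟩
  | tail _ h ih => exact ⟨ih.1.trans (st_wd C h).1, ih.2.trans (st_wd C h).2⟩

lemma red_congr (C : SimpleCartanMatrix n) {l l' : List (Fin n)}
    (h : wProd C.a l = wProd C.a l') (hl : l.length = l'.length)
    (hr : IsReducedList C.a l) : IsReducedList C.a l' := by
  intro m hm
  rw [← hl]; exact hr m (hm.trans h.symm)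

lemma wd_length (P : LW n) : (wd P).length = P.length := by simp [wd]

lemma red_cn (C : SimpleCartanMatrix n) {P Q : LW n} (h : Cn C.a P Q)
    (hr : IsReducedList C.a (wd P)) : IsReducedList C.a (wd Q) :=
  red_congr C (cn_wd C h).1 (by rw [wd_length, wd_length, (cn_wd C h).2]) hr

/-- Uniqueness and existence at length `k`. -/
def UE (C : SimpleCartanMatrix n) (k : ℕ) : Prop :=
  (∀ P Q : LW n, P.length = k → IsReducedList C.a (wd P) → Cn C.a P Q → wd P = wd Q → P = Q) ∧
  (∀ (P : LW n) (l : List (Fin n)), P.length = k → IsReducedList C.a (wd P) →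
    wProd C.a (wd P) = wProd C.a l → l.length = k → ∃ Q, wd Q = l ∧ Cn C.a P Q)

lemma headSwap (C : SimpleCartanMatrix n) {k : ℕ} (IH : ∀ m < k, UE C m) {i j : Fin n}
    {M N M' N' : LW n} (hk : M.length = k) (hr : IsReducedList C.a (wd M))
    (hMN : Ceq C.a M N) (hM : Hd C.a i j M M') (hN : Hd C.a i j N N') : Ceq C.a M' N' := by
  obtain ⟨p, P', Q', rfl, rfl, hc⟩ := hMN
  have hw := cn_wd C hc
  cases hM with
  | two x y v h1 h2 =>
    cases hN with
    | two x' y' v' _ _ =>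
      have hv : wProd C.a (wd v) = wProd C.a (wd v') := (wProd_cancel C).1 hw.1
      have hl : v.length = v'.length := by simpa using hw.2
      have hr1 : IsReducedList C.a (wd ((j, y) :: v)) := red_tail C hr
      have hr2 : IsReducedList C.a (wd v) := red_tail C hr1
      simp only [List.length_cons] at hk
      obtain ⟨v'', e1, e2⟩ := (IH v.length (by omega)).2 v (wd v') rfl hr2 hv
        (by rw [wd_length, hl])
      have e3 : Cn C.a ((j, y) :: v'') ((j, y') :: v') := (e2.cons (j, y)).symm.trans hc
      have e4 := (IH (v''.length + 1) (by have := (cn_wd C e2).2; omega)).1 _ _ (by simp)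
        (red_cn C (e2.cons (j, y)) hr1) e3 (by simp [wd] at e1 ⊢; exact e1)
      injection e4 with e5 e6
      injection e5 with _ e5
      subst e5; subst e6
      exact Ceq.mk' _ (e2.cons _)
    | three x' y' z' v' h3 h4 => omega
  | three x y z v h1 h2 =>
    cases hN with
    | two x' y' v' _ _ => omega
    | three x' y' z' v' _ _ =>
      have hv : wProd C.a (wd v) = wProd C.a (wd v') :=
        (wProd_cancel C).1 ((wProd_cancel C).1 hw.1)
      have hl : v.length = v'.length := by simpa using hw.2
      have hr1 : IsReducedList C.a (wd ((j, y) :: (i, z) :: v)) := red_tail C hr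
      have hr2 : IsReducedList C.a (wd v) := red_tail C (red_tail C hr1)
      simp only [List.length_cons] at hk
      obtain ⟨v'', e1, e2⟩ := (IH v.length (by omega)).2 v (wd v') rfl hr2 hv
        (by rw [wd_length, hl])
      have e3 : Cn C.a ((j, y) :: (i, z) :: v'') ((j, y') :: (i, z') :: v') :=
        ((e2.cons (i, z)).cons (j, y)).symm.trans hc
      have e4 := (IH (v''.length + 2) (by have := (cn_wd C e2).2; omega)).1 _ _ (by simp)
        (red_cn C ((e2.cons (i, z)).cons (j, y)) hr1) e3 (by simp [wd] at e1 ⊢; exact e1)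
      injection e4 with e5 e6
      injection e5 with _ e5
      injection e6 with e6 e7
      injection e6 with _ e6
      subst e5; subst e6; subst e7
      exact Ceq.mk' _ ((e2.cons _).cons _)

/-- Transport to a prescribed word with the same first letter. -/
lemma toWord (C : SimpleCartanMatrix n) {k : ℕ} (IH : ∀ m < k, UE C m) {i : Fin n} {x : ℤ}
    {P : LW n} {l : List (Fin n)} (hk : P.length + 1 = k)
    (hr : IsReducedList C.a (wd ((i, x) :: P)))
    (hl : l.length + 1 = k) (hw : wProd C.a (i :: l) = wProd C.a (wd ((i, x) :: P))) :
    ∃ Q, wd Q = l ∧ Ceq C.a ((i, x) :: P) ((i, x) :: Q) := by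
  obtain ⟨Q, h1, h2⟩ := (IH P.length (by omega)).2 P l rfl (red_tail C hr)
    ((wProd_cancel C).1 hw).symm (by omega)
  exact ⟨Q, h1, Ceq.mk' _ h2⟩

lemma wd_cons {P : LW n} {i : Fin n} {l : List (Fin n)} (h : wd P = i :: l) :
    ∃ x Q, P = (i, x) :: Q ∧ wd Q = l := by
  cases P with
  | nil => simp [wd] at h
  | cons p Q =>
    obtain ⟨j, x⟩ := p
    simp only [wd, List.map_cons, List.cons.injEq] at h
    exact ⟨x, Q, by rw [h.1], h.2⟩

/-- From first letter `i`, one can pass to any other descent `j`. -/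
lemma exists_hd (C : SimpleCartanMatrix n)
    (hsl : ∀ i j, i ≠ j → C.a i j = 0 ∨ C.a i j = -1) {k : ℕ} (IH : ∀ m < k, UE C m)
    {i j : Fin n} {x : ℤ} {P : LW n} (hk : P.length + 1 = k)
    (hr : IsReducedList C.a (wd ((i, x) :: P)))
    (hij : i ≠ j) (hj : Desc C.a (wd ((i, x) :: P)) (al j)) :
    ∃ M M', Ceq C.a ((i, x) :: P) M ∧ Hd C.a i j M M' := by
  have hi : Desc C.a (wd ((i, x) :: P)) (al i) := desc_head C hsl hr
  have hs := a_symm C hsl j i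
  rcases hsl i j hij with h | h
  · obtain ⟨r, h1, h2⟩ := pre_exists C hsl _ _ (pre2 C h hi hj)
    rw [wd_length] at h1
    simp at h1
    obtain ⟨Q, h3, h4⟩ := toWord C IH hk hr (l := j :: r) (by simp; omega) h2
    obtain ⟨y, Q, rfl, h5⟩ := wd_cons h3
    exact ⟨_, _, h4, Hd.two _ _ _ h (hs.trans h)⟩
  · obtain ⟨r, h1, h2⟩ := pre_exists C hsl _ _ (pre3 C h (hs.trans h) hi hj)
    rw [wd_length] at h1
    simp at h1
    obtain ⟨Q, h3, h4⟩ := toWord C IH hk hr (l := j :: i :: r) (by simp; omega) h2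
    obtain ⟨y, Q, rfl, h5⟩ := wd_cons h3
    obtain ⟨z, Q, rfl, h6⟩ := wd_cons h5
    exact ⟨_, _, h4, Hd.three _ _ _ _ h (hs.trans h)⟩

/-- The hexagon property. -/
def Hex (a : Fin n → Fin n → ℤ) (P : LW n) (i j m : Fin n) : Prop :=
  ∃ X1 X2 X3 X4 X5 X6, Ceq a P X1 ∧ Hd a i j X1 X2 ∧ Ceq a X2 X3 ∧ Hd a j m X3 X4 ∧
    Ceq a X4 X5 ∧ Hd a m i X5 X6 ∧ Ceq a X6 X1

lemma Hex.rev {P : LW n} {i j m : Fin n} (h : Hex a P i j m) : Hex a P i m j := by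
  obtain ⟨X1, X2, X3, X4, X5, X6, h0, h1, h2, h3, h4, h5, h6⟩ := h
  exact ⟨X6, X5, X4, X3, X2, X1, h0.trans h6.symm, h5.symm, h4.symm, h3.symm, h2.symm, h1.symm,
    h6.symm⟩

/-- Hypotheses on the starting labelled word. -/
structure Good (C : SimpleCartanMatrix n) (k : ℕ) (P : LW n) (i j m : Fin n) : Prop where
  len : P.length = k
  red : IsReducedList C.a (wd P)
  first : ∃ x P', P = (i, x) :: P'
  dj : Desc C.a (wd P) (al j)
  dm : Desc C.a (wd P) (al m)

lemma Good.rev {C : SimpleCartanMatrix n} {k : ℕ} {P : LW n} {i j m : Fin n}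
    (h : Good C k P i j m) : Good C k P i m j := ⟨h.len, h.red, h.first, h.dm, h.dj⟩

lemma Hex.rot (C : SimpleCartanMatrix n)
    (hsl : ∀ i j, i ≠ j → C.a i j = 0 ∨ C.a i j = -1) {k : ℕ} (IH : ∀ m < k, UE C m)
    {i j m : Fin n} (hij : i ≠ j) (H : ∀ P, Good C k P j m i → Hex C.a P j m i) :
    ∀ P, Good C k P i j m → Hex C.a P i j m := by
  intro P hP
  obtain ⟨hk, hr, ⟨x, P', rfl⟩, hj, hm⟩ := hP
  have hi : Desc C.a (wd ((i, x) :: P')) (al i) := desc_head C hsl hr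
  obtain ⟨M, M', h1, h2⟩ := exists_hd C hsl IH hk hr hij hj
  have hc : Cn C.a ((i, x) :: P') M' := h1.cn.trans (Cn.hd h2)
  have hw := cn_wd C hc
  have hr' := red_cn C hc hr
  have hk' : M'.length = k := by rw [← hw.2, hk]
  have hg : Good C k M' j m i := by
    refine ⟨hk', hr', ?_, desc_congr C hw.1 hm, desc_congr C hw.1 hi⟩
    cases h2 with
    | two x y v _ _ => exact ⟨_, _, rfl⟩
    | three x y z v _ _ => exact ⟨_, _, rfl⟩
  obtain ⟨Y1, Y2, Y3, Y4, Y5, Y6, g0, g1, g2, g3, g4, g5, g6⟩ := H M' hg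
  exact ⟨Y5, Y6, Y1, Y2, Y3, Y4,
    h1.trans (headSwap C IH hk' hr' (g0.trans g6.symm) h2.symm g5.symm), g5, g6, g1, g2, g3, g4⟩

lemma cn2 {i j : Fin n} (h : a i j = 0) (h' : a j i = 0) (x y : ℤ) (v : LW n) :
    Cn a ((i, x) :: (j, y) :: v) ((j, y) :: (i, x) :: v) := Cn.hd (Hd.two _ _ _ h h')

lemma cn3 {i j : Fin n} (h : a i j = -1) (h' : a j i = -1) (x y z : ℤ) (v : LW n) :
    Cn a ((i, x) :: (j, y) :: (i, z) :: v)
      ((j, max z (y - x)) :: (i, x + z) :: (j, min x (y - z)) :: v) :=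
  Cn.hd (Hd.three _ _ _ _ h h')

lemma hex111 (C : SimpleCartanMatrix n)
    (hsl : ∀ i j, i ≠ j → C.a i j = 0 ∨ C.a i j = -1) {k : ℕ} (IH : ∀ m < k, UE C m)
    {i j m : Fin n} (hij : C.a i j = 0) (him : C.a i m = 0) (hjm : C.a j m = 0) :
    ∀ P, Good C k P i j m → Hex C.a P i j m := by
  intro P hP
  obtain ⟨hk, hr, ⟨x, P', rfl⟩, hj, hm⟩ := hP
  have hi : Desc C.a (wd ((i, x) :: P')) (al i) := desc_head C hsl hr
  have hji := (a_symm C hsl j i).trans hij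
  have hmi := (a_symm C hsl m i).trans him
  have hmj := (a_symm C hsl m j).trans hjm
  obtain ⟨r, h1, h2⟩ := pre_exists C hsl _ _ (pre111 C hij him hjm hi hj hm)
  rw [wd_length] at h1
  simp at h1 hk
  obtain ⟨Q, h3, h4⟩ := toWord C IH hk hr (l := j :: m :: r) (by simp; omega) h2
  obtain ⟨y, Q, rfl, h5⟩ := wd_cons h3
  obtain ⟨z, Q, rfl, h6⟩ := wd_cons h5
  exact ⟨_, _, _, _, _, _, h4, Hd.two _ _ _ hij hji, Ceq.mk' _ (cn2 him hmi _ _ _),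
    Hd.two _ _ _ hjm hmj, Ceq.mk' _ (cn2 hji hij _ _ _), Hd.two _ _ _ hmi him,
    Ceq.mk' _ (cn2 hmj hjm _ _ _)⟩

lemma hex21 (C : SimpleCartanMatrix n)
    (hsl : ∀ i j, i ≠ j → C.a i j = 0 ∨ C.a i j = -1) {k : ℕ} (IH : ∀ m < k, UE C m)
    {i j m : Fin n} (hij : C.a i j = -1) (him : C.a i m = 0) (hjm : C.a j m = 0) :
    ∀ P, Good C k P i j m → Hex C.a P i j m := by
  intro P hP
  obtain ⟨hk, hr, ⟨x, P', rfl⟩, hj, hm⟩ := hP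
  have hi : Desc C.a (wd ((i, x) :: P')) (al i) := desc_head C hsl hr
  have hji := (a_symm C hsl j i).trans hij
  have hmi := (a_symm C hsl m i).trans him
  have hmj := (a_symm C hsl m j).trans hjm
  obtain ⟨r, h1, h2⟩ := pre_exists C hsl _ _ (pre21 C hij hji him hjm hi hj hm)
  rw [wd_length] at h1
  simp at h1 hk
  obtain ⟨Q, h3, h4⟩ := toWord C IH hk hr (l := j :: i :: m :: r) (by simp; omega) h2
  obtain ⟨y, Q, rfl, h5⟩ := wd_cons h3
  obtain ⟨z, Q, rfl, h6⟩ := wd_cons h5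
  obtain ⟨t, Q, rfl, h7⟩ := wd_cons h6
  refine ⟨_, _, (j, max z (y - x)) :: (m, t) :: (i, x + z) :: (j, min x (y - z)) :: Q, _,
    _, _, h4, Hd.three _ _ _ _ hij hji, ?_,
    Hd.two _ _ _ hjm hmj, Ceq.mk' _ (cn3 hji hij _ _ _ _), Hd.two _ _ _ hmi him, ?_⟩
  · exact Ceq.mk' _ (((cn2 hjm hmj _ _ _).cons _).trans (cn2 him hmi _ _ _))
  · have := (Hd.three x y z ((m, t) :: Q) hij hji).symm
    have e1 : max (min x (y - z)) (x + z - max z (y - x)) = x := by omega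
    have e2 : max z (y - x) + min x (y - z) = y := by omega
    have e3 : min (max z (y - x)) (x + z - min x (y - z)) = z := by omega
    rw [e1, e2, e3]
    exact Ceq.mk' _ ((cn2 hmj hjm _ _ _).trans ((cn2 hmi him _ _ _).cons _))

/-- One three-move as a relation between triples. -/
def TM (x y z x' y' z' : ℤ) : Prop :=
  (x + z ≤ y ∧ x' = y - x ∧ y' = x + z ∧ z' = x) ∨
  (y ≤ x + z ∧ x' = z ∧ y' = x + z ∧ z' = y - z)

lemma tm_mk (x y z : ℤ) : ∃ x' y' z', TM x y z x' y' z' ∧ max z (y - x) = x' ∧ x + z = y' ∧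
    min x (y - z) = z' := by
  refine ⟨_, _, _, ?_, rfl, rfl, rfl⟩
  unfold TM; omega

lemma cn3' {i j : Fin n} (h : a i j = -1) (h' : a j i = -1) {x y z x' y' z' : ℤ}
    (ht : TM x y z x' y' z') (v : LW n) :
    Cn a ((i, x) :: (j, y) :: (i, z) :: v) ((j, x') :: (i, y') :: (j, z') :: v) := by
  have := cn3 h h' x y z v
  unfold TM at ht
  convert this using 4
  · omega
  · omega
  · congr 2; omega

lemma hd3' {i j : Fin n} (h : a i j = -1) (h' : a j i = -1) {x y z x' y' z' : ℤ}
    (ht : TM x y z x' y' z') (v : LW n) :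
    Hd a i j ((i, x) :: (j, y) :: (i, z) :: v) ((j, x') :: (i, y') :: (j, z') :: v) := by
  have := Hd.three x y z v h h'
  unfold TM at ht
  convert this using 4
  · omega
  · omega
  · congr 2; omega

end LoopId

namespace LoopId

variable {n : ℕ}

set_option maxHeartbeats 4000000 in
/-- The tetrahedron identity. -/
lemma tetra {a b c d e f p1 q1 r1 p2 q2 r2 p3 q3 r3 p4 q4 r4 p5 q5 r5 p6 q6 r6 p7 q7 r7
    p8 q8 r8 : ℤ}
    (t1 : TM a b c p1 q1 r1) (t2 : TM r1 d e p2 q2 r2) (t3 : TM q1 q2 f p3 q3 r3)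
    (t4 : TM p1 p2 p3 p4 q4 r4) (t5 : TM r4 r3 r2 p5 q5 r5) (t6 : TM q4 q3 p5 p6 q6 r6)
    (t7 : TM p4 q6 q5 p7 q7 r7) (t8 : TM r7 r6 r5 p8 q8 r8) :
    p6 = a ∧ p7 = b ∧ p8 = c ∧ q7 = d ∧ q8 = e ∧ r8 = f := by
  unfold TM at t1 t2 t3 t4
  rcases t1 with ⟨_, rfl, rfl, rfl⟩ | ⟨_, rfl, rfl, rfl⟩ <;>
  rcases t2 with ⟨_, rfl, rfl, rfl⟩ | ⟨_, rfl, rfl, rfl⟩ <;>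
  rcases t3 with ⟨_, rfl, rfl, rfl⟩ | ⟨_, rfl, rfl, rfl⟩ <;>
  rcases t4 with ⟨_, rfl, rfl, rfl⟩ | ⟨_, rfl, rfl, rfl⟩ <;>
  · unfold TM at t5 t6 t7 t8
    rcases t5 with ⟨_, rfl, rfl, rfl⟩ | ⟨_, rfl, rfl, rfl⟩ <;>
    rcases t6 with ⟨_, rfl, rfl, rfl⟩ | ⟨_, rfl, rfl, rfl⟩ <;>
    rcases t7 with ⟨_, rfl, rfl, rfl⟩ | ⟨_, rfl, rfl, rfl⟩ <;>
    rcases t8 with ⟨_, rfl, rfl, rfl⟩ | ⟨_, rfl, rfl, rfl⟩ <;>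
    (refine ⟨?_, ?_, ?_, ?_, ?_, ?_⟩ <;> omega)

lemma tm_ex (x y z : ℤ) : ∃ x' y' z', TM x y z x' y' z' := by
  obtain ⟨x', y', z', h, _⟩ := tm_mk x y z
  exact ⟨x', y', z', h⟩

lemma hexA3 (C : SimpleCartanMatrix n)
    (hsl : ∀ i j, i ≠ j → C.a i j = 0 ∨ C.a i j = -1) {k : ℕ} (IH : ∀ m < k, UE C m)
    {i j m : Fin n} (hij : C.a i j = -1) (him : C.a i m = 0) (hjm : C.a j m = -1) :
    ∀ P, Good C k P i j m → Hex C.a P i j m := by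
  intro P hP
  obtain ⟨hk, hr, ⟨x, P', rfl⟩, hj, hm⟩ := hP
  have hi : Desc C.a (wd ((i, x) :: P')) (al i) := desc_head C hsl hr
  have hji := (a_symm C hsl j i).trans hij
  have hmi := (a_symm C hsl m i).trans him
  have hmj := (a_symm C hsl m j).trans hjm
  obtain ⟨r, h1, h2⟩ := pre_exists C hsl _ _ (preA3 C hij hji him hmi hjm hmj hi hj hm)
  rw [wd_length] at h1
  simp at h1 hk
  obtain ⟨Q, h3, h4⟩ := toWord C IH hk hr (l := j :: i :: m :: j :: i :: r) (by simp; omega) h2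
  obtain ⟨b, Q, rfl, h5⟩ := wd_cons h3
  obtain ⟨c, Q, rfl, h6⟩ := wd_cons h5
  obtain ⟨d, Q, rfl, h7⟩ := wd_cons h6
  obtain ⟨e, Q, rfl, h8⟩ := wd_cons h7
  obtain ⟨f, Q, rfl, h9⟩ := wd_cons h8
  obtain ⟨p1, q1, r1, t1⟩ := tm_ex x b c
  obtain ⟨p2, q2, r2, t2⟩ := tm_ex r1 d e
  obtain ⟨p3, q3, r3, t3⟩ := tm_ex q1 q2 f
  obtain ⟨p4, q4, r4, t4⟩ := tm_ex p1 p2 p3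
  obtain ⟨p5, q5, r5, t5⟩ := tm_ex r4 r3 r2
  obtain ⟨p6, q6, r6, t6⟩ := tm_ex q4 q3 p5
  obtain ⟨p7, q7, r7, t7⟩ := tm_ex p4 q6 q5
  obtain ⟨p8, q8, r8, t8⟩ := tm_ex r7 r6 r5
  obtain ⟨g1, g2, g3, g4, g5, g6⟩ := tetra t1 t2 t3 t4 t5 t6 t7 t8
  refine ⟨_, _, (j, p1) :: (m, p2) :: (j, p3) :: (i, q3) :: (j, r3) :: (m, r2) :: Q, _,
    (m, p4) :: (i, p6) :: (j, q6) :: (i, r6) :: (m, q5) :: (j, r5) :: Q, _,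
    h4, hd3' hij hji t1 _, Ceq.mk' _ ?_, hd3' hjm hmj t4 _, Ceq.mk' _ ?_,
    Hd.two _ _ _ hmi him, ?_⟩
  · refine ((cn3' hjm hmj t2 _).cons _).trans ?_
    refine (cn2 him hmi _ _ _).trans (Cn.cons _ ?_)
    refine (((cn2 hmi him _ _ _).cons _).cons _).trans ?_
    exact cn3' hij hji t3 _
  · refine (((cn2 hmi him _ _ _).cons _)).trans ?_
    refine (((cn3' hmj hjm t5 _).cons _).cons _).trans ?_
    exact cn3' hji hij t6 _
  · rw [← g1, ← g2, ← g3, ← g4, ← g5, ← g6]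
    refine Ceq.mk' _ ?_
    refine (((cn2 him hmi _ _ _).cons _).cons _).trans ?_
    refine (cn3' hmj hjm t7 _).trans (Cn.cons _ ?_)
    refine ((cn3' hji hij t8 _).cons _).trans ?_
    exact cn2 hmi him _ _ _

lemma hex_all (C : SimpleCartanMatrix n)
    (hsl : ∀ i j, i ≠ j → C.a i j = 0 ∨ C.a i j = -1) {k : ℕ} (IH : ∀ m < k, UE C m)
    {i j m : Fin n} (hij : i ≠ j) (him : i ≠ m) (hjm : j ≠ m) :
    ∀ P, Good C k P i j m → Hex C.a P i j m := by
  have sji := a_symm C hsl j i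
  have smi := a_symm C hsl m i
  have smj := a_symm C hsl m j
  rcases hsl i j hij with h1 | h1 <;> rcases hsl i m him with h2 | h2 <;>
    rcases hsl j m hjm with h3 | h3
  · exact hex111 C hsl IH h1 h2 h3
  · exact Hex.rot C hsl IH hij (hex21 C hsl IH h3 (by omega) (by omega))
  · exact Hex.rot C hsl IH hij (Hex.rot C hsl IH hjm
      (hex21 C hsl IH (by omega) (by omega) (by omega)))
  · exact fun P hP => (hexA3 C hsl IH h2 (by omega) (by omega) P hP.rev).rev
  · exact hex21 C hsl IH h1 h2 h3
  · exact hexA3 C hsl IH h1 h2 h3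
  · exact Hex.rot C hsl IH hij (fun P hP =>
      (hexA3 C hsl IH (by omega) (by omega) (by omega) P hP.rev).rev)
  · exact (no_triangle C hsl i j m h1 h3 h2).elim

/-- Canonical transport. -/
def Tr (a : Fin n → Fin n → ℤ) (P Q : LW n) : Prop :=
  Ceq a P Q ∨ ∃ i j M M', Ceq a P M ∧ Hd a i j M M' ∧ Ceq a M' Q

lemma Hd.first {a : Fin n → Fin n → ℤ} {i j : Fin n} {P Q : LW n} (h : Hd a i j P Q) :
    (∃ x P', P = (i, x) :: P') ∧ (∃ y Q', Q = (j, y) :: Q') := by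
  cases h with
  | two x y v _ _ => exact ⟨⟨_, _, rfl⟩, ⟨_, _, rfl⟩⟩
  | three x y z v _ _ => exact ⟨⟨_, _, rfl⟩, ⟨_, _, rfl⟩⟩

lemma Hd.ne (C : SimpleCartanMatrix n) {i j : Fin n} {P Q : LW n} (h : Hd C.a i j P Q) :
    i ≠ j := by
  rintro rfl
  have := C.diag i
  cases h <;> omega

lemma Ceq.first {a : Fin n → Fin n → ℤ} {P Q : LW n} {i : Fin n} (h : Ceq a P Q)
    (hQ : ∃ x Q', Q = (i, x) :: Q') : ∃ x P', P = (i, x) :: P' := by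
  obtain ⟨p, P', Q', rfl, rfl, h⟩ := h
  obtain ⟨x, Q'', h'⟩ := hQ
  injection h' with h1 h2
  exact ⟨x, P', by rw [h1]⟩

lemma desc_first (C : SimpleCartanMatrix n)
    (hsl : ∀ i j, i ≠ j → C.a i j = 0 ∨ C.a i j = -1) {P Q : LW n} {i : Fin n}
    (hr : IsReducedList C.a (wd P)) (h : Cn C.a P Q)
    (hQ : ∃ x Q', Q = (i, x) :: Q') : Desc C.a (wd P) (al i) := by
  obtain ⟨x, Q', rfl⟩ := hQ
  exact desc_congr C (cn_wd C h).1.symm (desc_head C hsl (red_cn C h hr))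

lemma tr_step (C : SimpleCartanMatrix n)
    (hsl : ∀ i j, i ≠ j → C.a i j = 0 ∨ C.a i j = -1) {k : ℕ} (IH : ∀ m < k, UE C m)
    {P Q Q' : LW n} (hk : P.length = k) (hr : IsReducedList C.a (wd P))
    (h : Tr C.a P Q) (hs : St C.a Q Q') : Tr C.a P Q' := by
  cases hs with
  | cons p R R' hs =>
    have hc : Ceq C.a (p :: R) (p :: R') := Ceq.mk' _ (Relation.ReflTransGen.single hs)
    rcases h with h | ⟨i, j, M, M', h1, h2, h3⟩
    · exact Or.inl (h.trans hc)
    · exact Or.inr ⟨i, j, M, M', h1, h2, h3.trans hc⟩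
  | head j' m _ _ hd =>
    rcases h with h | ⟨i, j, M, M', h1, h2, h3⟩
    · refine Or.inr ⟨j', m, Q, Q', h, hd, ?_⟩
      obtain ⟨y, R, rfl⟩ := hd.first.2
      exact Ceq.mk' _ (Cn.refl _)
    · obtain ⟨y, R, hy⟩ := h3.first hd.first.1
      obtain ⟨y', R', hy'⟩ := h2.first.2
      have : j' = j := by
        rw [hy] at hy'
        injection hy' with e _
        injection e
      subst this
      have c1 : Cn C.a P M := h1.cn
      have c2 : Cn C.a P M' := c1.trans (Cn.hd h2)
      have c3 : Cn C.a P Q := c2.trans h3.cn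
      have c4 : Cn C.a P Q' := c3.trans (Cn.hd hd)
      have lenM : M.length = k := by rw [← (cn_wd C c1).2, hk]
      have lenM' : M'.length = k := by rw [← (cn_wd C c2).2, hk]
      have lenQ : Q.length = k := by rw [← (cn_wd C c3).2, hk]
      by_cases him : i = m
      · subst him
        exact Or.inl (h1.trans (headSwap C IH lenM' (red_cn C c2 hr) h3 h2.symm hd))
      · have hg : Good C k P i j' m :=
          ⟨hk, hr, h1.first h2.first.1, desc_first C hsl hr c2 h2.first.2,
            desc_first C hsl hr c4 hd.first.2⟩
        obtain ⟨X1, X2, X3, X4, X5, X6, g0, g1, g2, g3, g4, g5, g6⟩ :=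
          hex_all C hsl IH (Hd.ne C h2) him (Hd.ne C hd) P hg
        have e1 : Ceq C.a M' X2 :=
          headSwap C IH lenM (red_cn C c1 hr) (h1.symm.trans g0) h2 g1
        have e2 : Ceq C.a Q X3 := h3.symm.trans (e1.trans g2)
        have e3 : Ceq C.a Q' X4 := headSwap C IH lenQ (red_cn C c3 hr) e2 hd g3
        exact Or.inr ⟨i, m, X6, X5, g0.trans g6.symm, g5.symm, (e3.trans g4).symm⟩

lemma ue_all (C : SimpleCartanMatrix n)
    (hsl : ∀ i j, i ≠ j → C.a i j = 0 ∨ C.a i j = -1) (k : ℕ) : UE C k := by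
  induction k using Nat.strong_induction_on with
  | _ k IH =>
  constructor
  · intro P Q hk hr hc hw
    cases P with
    | nil =>
      have := (cn_wd C hc).2
      simp at this
      exact (List.length_eq_zero_iff.1 this.symm).symm
    | cons p P' =>
      have key : Tr C.a (p :: P') Q := by
        induction hc with
        | refl => exact Or.inl (Ceq.mk' _ (Cn.refl _))
        | tail _ hs ih =>
          rename_i S T hS
          clear hw
          have : ∀ T, Relation.ReflTransGen (St C.a) (p :: P') T → Tr C.a (p :: P') T := by
            intro T hT
            induction hT with
            | refl => exact Or.inl (Ceq.mk' _ (Cn.refl _))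
            | tail _ hs ih => exact tr_step C hsl IH hk hr ih hs
          exact tr_step C hsl IH hk hr (this _ hS) hs
      rcases key with key | ⟨i, j, M, M', h1, h2, h3⟩
      · obtain ⟨q, R, Q', e1, rfl, h⟩ := key
        injection e1 with e1 e2
        subst e1; subst e2
        simp only [wd, List.map_cons, List.cons.injEq, true_and] at hw
        simp only [List.length_cons] at hk
        rw [(IH P'.length (by omega)).1 P' Q' rfl (red_tail C hr) h hw]
      · exfalso
        obtain ⟨x, R, hx⟩ := h1.first h2.first.1
        obtain ⟨y, R', hy⟩ := h3.symm.first h2.first.2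
        rw [hx, hy] at hw
        simp only [wd, List.map_cons, List.cons.injEq] at hw
        exact Hd.ne C h2 hw.1
  · intro P l hk hr hw hl
    cases P with
    | nil =>
      simp at hk
      subst hk
      rw [List.length_eq_zero_iff] at hl
      exact ⟨[], by simp [hl, wd], Cn.refl _⟩
    | cons p P' =>
      obtain ⟨i, x⟩ := p
      cases l with
      | nil => simp at hk hl; omega
      | cons j l =>
        simp only [List.length_cons] at hk hl
        by_cases hij : i = j
        · subst hij
          obtain ⟨Q, h1, h2⟩ := toWord C IH hk hr hl hw.symm
          exact ⟨_, by rw [← h1]; rfl, h2.cn⟩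
        · have hrl : IsReducedList C.a (j :: l) :=
            red_congr C hw (by rw [wd_length]; simp; omega) hr
          have hj : Desc C.a (wd ((i, x) :: P')) (al j) :=
            desc_congr C hw.symm (desc_head C hsl hrl)
          obtain ⟨M, M', h1, h2⟩ := exists_hd C hsl IH hk hr hij hj
          have hc : Cn C.a ((i, x) :: P') M' := h1.cn.trans (Cn.hd h2)
          obtain ⟨y, R, rfl⟩ := h2.first.2
          have hww := cn_wd C hc
          simp only [List.length_cons] at hww
          obtain ⟨Q, h3, h4⟩ := toWord C IH (by omega) (red_cn C hc hr) hl
            (hw.symm.trans hww.1)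
          exact ⟨_, by rw [← h3]; rfl, hc.trans h4.cn⟩

/-- Labelled word from functions. -/
def lw {k : ℕ} (w : Fin k → Fin n) (x : Fin k → ℤ) : LW n := List.ofFn fun q => (w q, x q)

lemma lw_succ {k : ℕ} (w : Fin (k + 1) → Fin n) (x : Fin (k + 1) → ℤ) :
    lw w x = (w 0, x 0) :: lw (fun q => w q.succ) (fun q => x q.succ) := by
  simp [lw, List.ofFn_succ]

lemma lw_wd {k : ℕ} (w : Fin k → Fin n) (x : Fin k → ℤ) : wd (lw w x) = List.ofFn w := by
  simp only [wd, lw, List.map_ofFn]; rfl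

lemma step_two (a : Fin n → Fin n → ℤ) (p : ℕ) : ∀ {k : ℕ} (w : Fin k → Fin n) (x : Fin k → ℤ),
    ValidMove a w (.two p) →
    St a (lw w x) (lw (moveWord w (.two p)) (moveZ x (.two p))) := by
  induction p with
  | zero =>
    intro k w x h
    obtain ⟨hk, h1, h2⟩ := h
    obtain ⟨k, rfl⟩ : ∃ m, k = m + 2 := ⟨k - 2, by omega⟩
    rw [lw_succ, lw_succ, lw_succ, lw_succ]
    refine St.head (w 0) (w 1) _ _ ?_
    exact Hd.two (a := a) _ _ _ h1 h2
  | succ p ih =>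
    intro k w x h
    obtain ⟨hk, h1, h2⟩ := h
    obtain ⟨k, rfl⟩ : ∃ m, k = m + 1 := ⟨k - 1, by omega⟩
    have := ih (fun q => w q.succ) (fun q => x q.succ) ⟨by omega, h1, h2⟩
    rw [lw_succ, lw_succ (moveWord _ _)]
    have e1 : (fun q : Fin k => moveWord w (.two (p + 1)) q.succ) =
        moveWord (fun q => w q.succ) (.two p) := by
      funext q
      simp [moveWord]
    have e2 : (fun q : Fin k => moveZ x (.two (p + 1)) q.succ) =
        moveZ (fun q => x q.succ) (.two p) := by
      funext q
      simp [moveZ]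
    have e3 : moveWord w (.two (p + 1)) 0 = w 0 := by simp [moveWord]
    have e4 : moveZ x (.two (p + 1)) 0 = x 0 := by simp [moveZ]
    rw [e1, e2, e3, e4]
    exact St.cons _ _ _ this

lemma step_three (a : Fin n → Fin n → ℤ) (p : ℕ) :
    ∀ {k : ℕ} (w : Fin k → Fin n) (x : Fin k → ℤ),
    ValidMove a w (.three p) →
    St a (lw w x) (lw (moveWord w (.three p)) (moveZ x (.three p))) := by
  induction p with
  | zero =>
    intro k w x h
    obtain ⟨hk, h0, h1, h2⟩ := h
    obtain ⟨k, rfl⟩ : ∃ m, k = m + 3 := ⟨k - 3, by omega⟩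
    rw [lw_succ, lw_succ, lw_succ, lw_succ, lw_succ, lw_succ]
    refine St.head (w 0) (w 1) _ _ ?_
    have := Hd.three (a := a) (x 0) (x 1) (x 2)
      (lw (fun q : Fin k => w q.succ.succ.succ) (fun q => x q.succ.succ.succ)) h1 h2
    have h0' : w 0 = w 2 := h0
    have e : w (Fin.succ (Fin.succ 0)) = w 0 := h0.symm
    rw [e]
    have e2 : moveZ x (.three 0) 0 = max (x 2) (x 1 - x 0) := by
      simp [moveZ]; rfl
    have e3 : moveZ x (.three 0) (Fin.succ 0) = x 0 + x 2 := by
      simp [moveZ]; rfl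
    have e4 : moveZ x (.three 0) (Fin.succ (Fin.succ 0)) = min (x 0) (x 1 - x 2) := by
      simp [moveZ]; rfl
    have e5 : (fun q : Fin k => moveZ x (.three 0) q.succ.succ.succ) =
        fun q : Fin k => x q.succ.succ.succ := by
      funext q; simp [moveZ]
    rw [e2, e3, e4, e5]
    exact this
  | succ p ih =>
    intro k w x h
    obtain ⟨hk, h0, h1, h2⟩ := h
    obtain ⟨k, rfl⟩ : ∃ m, k = m + 1 := ⟨k - 1, by omega⟩
    have := ih (fun q => w q.succ) (fun q => x q.succ) ⟨by omega, h0, h1, h2⟩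
    rw [lw_succ, lw_succ (moveWord _ _)]
    have e1 : (fun q : Fin k => moveWord w (.three (p + 1)) q.succ) =
        moveWord (fun q => w q.succ) (.three p) := by
      funext q
      simp [moveWord]
    have e2 : (fun q : Fin k => moveZ x (.three (p + 1)) q.succ) =
        moveZ (fun q => x q.succ) (.three p) := by
      funext q
      have hk' : p + 2 < k := by omega
      simp [moveZ, hk, hk']
    have e3 : moveWord w (.three (p + 1)) 0 = w 0 := by simp [moveWord]
    have e4 : moveZ x (.three (p + 1)) 0 = x 0 := by
      simp [moveZ, hk]
    rw [e1, e2, e3, e4]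
    exact St.cons _ _ _ this

lemma seq_cn (a : Fin n → Fin n → ℤ) {k : ℕ} (w : Fin k → Fin n) (ms : List BMove)
    (h : ValidSeq a w ms) : ∀ x : Fin k → ℤ,
    Cn a (lw w x) (lw (wordAfter w ms) (zAfter x ms)) := by
  induction h with
  | nil w => intro x; exact Cn.refl _
  | cons w m ms hm _ ih =>
    intro x
    refine Cn.trans ?_ (ih (moveZ x m))
    refine Relation.ReflTransGen.single ?_
    cases m with
    | two p => exact step_two a p w x hm
    | three p => exact step_three a p w x hm

end LoopId

/-- For a simply-laced finite-type Cartan matrix and a reduced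
word `ι`, any finite sequence of 2-moves and 3-moves transforming `ι` back into
itself induces the identity map of `ℤ^k`. -/
theorem moves_loop_identity {n k : ℕ} (C : SimpleCartanMatrix n)
    (hsl : ∀ i j, i ≠ j → C.a i j = 0 ∨ C.a i j = -1)
    (ι : Fin k → Fin n) (hred : IsReducedList C.a (List.ofFn ι))
    (ms : List BMove) (hval : ValidSeq C.a ι ms) (hclosed : wordAfter ι ms = ι) :
    ∀ x : Fin k → ℤ, zAfter x ms = x := by
  intro x
  have hc := LoopId.seq_cn C.a ι ms hval x
  rw [hclosed] at hc
  have := (LoopId.ue_all C hsl k).1 _ _ (by simp [LoopId.lw]) (by rw [LoopId.lw_wd]; exact hred)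
    hc (by rw [LoopId.lw_wd, LoopId.lw_wd])
  have h2 := List.ofFn_injective this
  funext q
  exact (congrArg Prod.snd (congrFun h2 q)).symm
end

section
/- Let A be a simply-laced Cartan matrix of finite type, w a Weyl group element and ι = (i_1,…,i_k) a reduced word for w. Suppose one finite sequence of 2-moves and 3-moves transforms ι into a reduced word 𝐣 = (j_1,…,j_k) and another such sequence transforms ι into a reduced word 𝐥 = (l_1,…,l_k), with j_1 = l_1. Then for every x ∈ ℤ^k, the images y = (y_1,…,y_k) and z = (z_1,…,z_k) of x under the corresponding compositions of associated maps satisfy y_1 = z_1. -/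
section Aux

variable {n : ℕ} (a : Fin n → Fin n → ℤ)

/-- The linear functional `v ↦ ∑ a i j v j`. -/
def cFun (i : Fin n) : (Fin n → ℚ) →ₗ[ℚ] ℚ :=
  ∑ j, (a i j : ℚ) • LinearMap.proj j

/-- simple root -/
def rt (i : Fin n) : Fin n → ℚ := Pi.single i 1

theorem cFun_apply (i : Fin n) (v : Fin n → ℚ) : cFun a i v = ∑ j, (a i j : ℚ) * v j := by
  simp [cFun, LinearMap.sum_apply]

theorem cFun_rt (i j : Fin n) : cFun a i (rt j) = a i j := by
  rw [cFun_apply]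
  simp [rt, Pi.single_apply]

/-- the simple reflection as linear map -/
def sLin (i : Fin n) : (Fin n → ℚ) →ₗ[ℚ] (Fin n → ℚ) :=
  LinearMap.id - (cFun a i).smulRight (rt i)

theorem sLin_apply (i : Fin n) (v : Fin n → ℚ) : sLin a i v = v - cFun a i v • rt i := by
  simp [sLin]

/-- Data: simply-laced symmetric matrix without triangles. -/
structure SLData : Prop where
  diag : ∀ i, a i i = 2
  symm : ∀ i j, a i j = a j i
  sl : ∀ i j, i ≠ j → a i j = 0 ∨ a i j = -1
  notri : ∀ i j k, a i j = -1 → a j k = -1 → a i k = -1 → False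

variable {a}

theorem sLin_invol (hd : ∀ i, a i i = 2) (i : Fin n) : Function.Involutive (sLin a i) := by
  intro v
  simp only [sLin_apply, map_sub, map_smul, cFun_rt, hd]
  push_cast
  module

/-- the simple reflection as linear equivalence -/
def sE (hd : ∀ i, a i i = 2) (i : Fin n) : (Fin n → ℚ) ≃ₗ[ℚ] (Fin n → ℚ) :=
  LinearEquiv.ofInvolutive (sLin a i) (sLin_invol hd i)

theorem sE_apply (hd : ∀ i, a i i = 2) (i : Fin n) (v : Fin n → ℚ) :
    sE hd i v = v - cFun a i v • rt i := sLin_apply a i v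

theorem sE_rt (hd : ∀ i, a i i = 2) (i j : Fin n) :
    sE hd i (rt j) = rt j - (a i j : ℚ) • rt i := by
  rw [sE_apply, cFun_rt]

theorem sE_self (hd : ∀ i, a i i = 2) (i : Fin n) : sE hd i (rt i) = - rt i := by
  rw [sE_rt, hd]; push_cast; module

theorem sE_zero (hd : ∀ i, a i i = 2) {i j : Fin n} (h : a i j = 0) :
    sE hd i (rt j) = rt j := by
  rw [sE_rt, h]; push_cast; module

theorem sE_neg (hd : ∀ i, a i i = 2) {i j : Fin n} (h : a i j = -1) :
    sE hd i (rt j) = rt i + rt j := by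
  rw [sE_rt, h]; push_cast; module

theorem sE_mul_self (hd : ∀ i, a i i = 2) (i : Fin n) : sE hd i * sE hd i = 1 := by
  apply LinearEquiv.ext
  intro v
  exact sLin_invol hd i v

theorem sE_mul_cancel (hd : ∀ i, a i i = 2) (i : Fin n) (g : (Fin n → ℚ) ≃ₗ[ℚ] (Fin n → ℚ)) :
    sE hd i * (sE hd i * g) = g := by
  rw [← mul_assoc, sE_mul_self, one_mul]

theorem sE_comm (hd : ∀ i, a i i = 2) {i j : Fin n} (h : a i j = 0) (h' : a j i = 0) :
    sE hd i * sE hd j = sE hd j * sE hd i := by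
  apply LinearEquiv.ext
  intro v
  simp only [LinearEquiv.mul_apply, sE_apply, map_sub, map_smul, cFun_rt, h, h']
  push_cast
  module

theorem sE_braid (hd : ∀ i, a i i = 2) {i j : Fin n} (h : a i j = -1) (h' : a j i = -1) :
    sE hd i * (sE hd j * sE hd i) = sE hd j * (sE hd i * sE hd j) := by
  apply LinearEquiv.ext
  intro v
  simp only [LinearEquiv.mul_apply, sE_apply, map_sub, map_smul, cFun_rt, h, h', hd]
  push_cast
  module

/-- product along a word -/
def pE (hd : ∀ i, a i i = 2) (l : List (Fin n)) : (Fin n → ℚ) ≃ₗ[ℚ] (Fin n → ℚ) :=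
  (l.map (sE hd)).prod

@[simp] theorem pE_nil (hd : ∀ i, a i i = 2) : pE hd [] = 1 := rfl

@[simp] theorem pE_cons (hd : ∀ i, a i i = 2) (i : Fin n) (l : List (Fin n)) :
    pE hd (i :: l) = sE hd i * pE hd l := by simp [pE]

theorem pE_coe (hd : ∀ i, a i i = 2) (l : List (Fin n)) : ⇑(pE hd l) = wProd a l := by
  induction l with
  | nil => rfl
  | cons i l ih =>
    funext v
    have h1 : wProd a (i :: l) v = sRefl a i (wProd a l v) := rfl
    rw [h1, pE_cons, LinearEquiv.mul_apply, ih, sE_apply, sRefl, cFun_apply]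
    rfl

theorem pE_eq_iff (hd : ∀ i, a i i = 2) (l l' : List (Fin n)) :
    pE hd l = pE hd l' ↔ wProd a l = wProd a l' := by
  rw [← pE_coe hd, ← pE_coe hd]
  exact DFunLike.coe_fn_eq.symm

/-- reduced word -/
def Red (hd : ∀ i, a i i = 2) (l : List (Fin n)) : Prop :=
  ∀ l', pE hd l' = pE hd l → l.length ≤ l'.length

theorem red_iff (hd : ∀ i, a i i = 2) (l : List (Fin n)) : Red hd l ↔ IsReducedList a l := by
  simp only [Red, IsReducedList, pE_eq_iff]

theorem Red.tail {hd : ∀ i, a i i = 2} {i : Fin n} {l : List (Fin n)} (h : Red hd (i :: l)) :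
    Red hd l := by
  intro l' hl'
  have := h (i :: l') (by simp [hl'])
  simpa using this

theorem Red.of_le {hd : ∀ i, a i i = 2} {l l' : List (Fin n)} (h : Red hd l)
    (he : pE hd l' = pE hd l) (hl : l'.length ≤ l.length) : Red hd l' := by
  intro l'' hl''
  exact hl.trans (h l'' (hl''.trans he))

theorem Red.len_eq {hd : ∀ i, a i i = 2} {l l' : List (Fin n)} (h : Red hd l) (h' : Red hd l')
    (he : pE hd l' = pE hd l) : l'.length = l.length :=
  le_antisymm (h' l he.symm) (h l' he)

theorem rt_nonneg (i : Fin n) : (0 : Fin n → ℚ) ≤ rt i := by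
  intro c
  simp only [rt, Pi.single_apply, Pi.zero_apply]
  split_ifs <;> norm_num

theorem rt_ne_zero (i : Fin n) : (rt i : Fin n → ℚ) ≠ 0 := by
  intro h
  have := congrFun h i
  simp [rt] at this

theorem inv_sE (hd : ∀ i, a i i = 2) (i : Fin n) : (sE hd i)⁻¹ = sE hd i :=
  inv_eq_of_mul_eq_one_left (sE_mul_self hd i)

theorem pos_or (H : SLData a) : ∀ (N : ℕ) (l : List (Fin n)), l.length = N → Red H.diag l →
    ∀ i, 0 ≤ (pE H.diag l)⁻¹ (rt i) ∨
      ∃ l', pE H.diag l' = sE H.diag i * pE H.diag l ∧ l'.length < l.length := by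
  intro N
  induction N using Nat.strong_induction_on with
  | _ N IH =>
  intro l hN hl i
  match l, hN, hl with
  | [], _, _ => left; simpa using rt_nonneg i
  | j :: m, hN, hl =>
    have hm : m.length < N := by simp at hN; omega
    by_cases hij : i = j
    · subst hij
      right
      exact ⟨m, by rw [pE_cons, sE_mul_cancel], by simp⟩
    have hinv : ∀ v, (pE H.diag (j :: m))⁻¹ v = (pE H.diag m)⁻¹ (sE H.diag j v) := by
      intro v
      rw [pE_cons, mul_inv_rev, inv_sE]; rfl
    rcases H.sl i j hij with h0 | h1
    · have h0' : a j i = 0 := by rw [H.symm]; exact h0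
      rcases IH _ hm m rfl hl.tail i with h | ⟨l', h, h'⟩
      · left
        rwa [hinv, sE_zero H.diag h0']
      · right
        refine ⟨j :: l', ?_, by simp; omega⟩
        rw [pE_cons, h, pE_cons, ← mul_assoc, ← mul_assoc, sE_comm H.diag h0' h0]
    · have h1' : a j i = -1 := by rw [H.symm]; exact h1
      rcases IH _ hm m rfl hl.tail i with h | ⟨m', h, h'⟩
      · rcases IH _ hm m rfl hl.tail j with h2 | ⟨l', h2, h2'⟩
        · left
          rw [hinv, sE_neg H.diag h1', map_add]
          exact add_nonneg h2 h
        · exfalso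
          have := hl l' (by rw [h2, pE_cons])
          simp at this
          omega
      · have hmm : pE H.diag m = sE H.diag i * pE H.diag m' := by rw [h, sE_mul_cancel]
        have hlen : m.length ≤ m'.length + 1 := hl.tail (i :: m') (by rw [pE_cons, hmm])
        have hm' : Red H.diag m' := by
          have : Red H.diag (i :: m') := hl.tail.of_le (by rw [pE_cons, hmm]) (by simp; omega)
          exact this.tail
        rcases IH m'.length (by omega) m' rfl hm' j with h2 | ⟨l', h2, h2'⟩
        · left
          rw [hinv, hmm, mul_inv_rev, inv_sE, sE_neg H.diag h1', LinearEquiv.mul_apply, map_add,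
            sE_self, sE_neg H.diag h1]
          simpa using h2
        · right
          refine ⟨j :: i :: l', ?_, by simp; omega⟩
          rw [pE_cons, pE_cons, h2, pE_cons, hmm]
          have := congrArg (· * pE H.diag m') (sE_braid H.diag h1 h1')
          simp only [mul_assoc] at this
          exact this.symm

/-- peeling off a descent -/
theorem peel (H : SLData a) {l : List (Fin n)} (hl : Red H.diag l) {i : Fin n}
    (h : (pE H.diag l)⁻¹ (rt i) ≤ 0) :
    ∃ l', Red H.diag l' ∧ l'.length + 1 = l.length ∧ pE H.diag l = sE H.diag i * pE H.diag l' ∧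
      ∀ v, (pE H.diag l')⁻¹ v = (pE H.diag l)⁻¹ (sE H.diag i v) := by
  rcases pos_or H _ l rfl hl i with h1 | ⟨l', h1, h2⟩
  · exfalso
    have h3 := le_antisymm h h1
    have := (LinearEquiv.map_eq_zero_iff _).1 h3
    exact rt_ne_zero i this
  · have hp : pE H.diag l = sE H.diag i * pE H.diag l' := by rw [h1, sE_mul_cancel]
    have h3 : l.length ≤ l'.length + 1 := hl (i :: l') (by rw [pE_cons, hp])
    have h4 : Red H.diag (i :: l') := hl.of_le (by rw [pE_cons, hp]) (by simp; omega)
    refine ⟨l', h4.tail, by omega, hp, ?_⟩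
    intro v
    rw [h1, mul_inv_rev, inv_sE]; rfl

theorem neg_of_red (H : SLData a) {l : List (Fin n)} {i : Fin n} (hl : Red H.diag (i :: l)) :
    (pE H.diag (i :: l))⁻¹ (rt i) ≤ 0 := by
  rcases pos_or H _ l rfl hl.tail i with h1 | ⟨l', h1, h2⟩
  · rw [pE_cons, mul_inv_rev, inv_sE, LinearEquiv.mul_apply, sE_self, map_neg]
    exact neg_nonpos.2 h1
  · have := hl l' (by rw [h1, pE_cons])
    simp at this
    omega

theorem finish_red (H : SLData a) {l l' : List (Fin n)} (hl : Red H.diag l)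
    (he : pE H.diag l' = pE H.diag l) (hlen : l'.length = l.length) :
    pE H.diag l' = pE H.diag l ∧ Red H.diag l' := ⟨he, hl.of_le he hlen.le⟩

theorem word_two (H : SLData a) {l : List (Fin n)} (hl : Red H.diag l) {i j : Fin n}
    (hij : a i j = 0)
    (hi : (pE H.diag l)⁻¹ (rt i) ≤ 0) (hj : (pE H.diag l)⁻¹ (rt j) ≤ 0) :
    ∃ q, pE H.diag (i :: j :: q) = pE H.diag l ∧ Red H.diag (i :: j :: q) := by
  obtain ⟨l1, r1, e1, p1, v1⟩ := peel H hl hi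
  obtain ⟨l2, r2, e2, p2, v2⟩ := peel H r1 (i := j) (by rw [v1, sE_zero _ hij]; exact hj)
  exact ⟨l2, finish_red H hl (by rw [p1, p2]; simp) (by simp; omega)⟩

theorem word_three (H : SLData a) {l : List (Fin n)} (hl : Red H.diag l) {i j : Fin n}
    (hij : a i j = -1)
    (hi : (pE H.diag l)⁻¹ (rt i) ≤ 0) (hj : (pE H.diag l)⁻¹ (rt j) ≤ 0) :
    ∃ q, pE H.diag (i :: j :: i :: q) = pE H.diag l ∧ Red H.diag (i :: j :: i :: q) := by
  have hji : a j i = -1 := by rw [H.symm]; exact hij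
  obtain ⟨l1, r1, e1, p1, v1⟩ := peel H hl hi
  obtain ⟨l2, r2, e2, p2, v2⟩ := peel H r1 (i := j) (by
    rw [v1, sE_neg _ hij, map_add]; exact add_nonpos hi hj)
  obtain ⟨l3, r3, e3, p3, v3⟩ := peel H r2 (i := i) (by
    rw [v2, v1, sE_neg _ hji, map_add, sE_self, sE_neg _ hij]; simpa using hj)
  exact ⟨l3, finish_red H hl (by rw [p1, p2, p3]; simp) (by simp; omega)⟩

theorem word_111 (H : SLData a) {l : List (Fin n)} (hl : Red H.diag l) {i j k : Fin n}
    (hij : a i j = 0) (hik : a i k = 0) (hjk : a j k = 0)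
    (hi : (pE H.diag l)⁻¹ (rt i) ≤ 0) (hj : (pE H.diag l)⁻¹ (rt j) ≤ 0)
    (hk : (pE H.diag l)⁻¹ (rt k) ≤ 0) :
    ∃ q, pE H.diag (i :: j :: k :: q) = pE H.diag l ∧ Red H.diag (i :: j :: k :: q) := by
  obtain ⟨l1, r1, e1, p1, v1⟩ := peel H hl hi
  obtain ⟨l2, r2, e2, p2, v2⟩ := peel H r1 (i := j) (by rw [v1, sE_zero _ hij]; exact hj)
  obtain ⟨l3, r3, e3, p3, v3⟩ := peel H r2 (i := k) (by
    rw [v2, v1, sE_zero _ hjk, sE_zero _ hik]; exact hk)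
  exact ⟨l3, finish_red H hl (by rw [p1, p2, p3]; simp) (by simp; omega)⟩

theorem word_21 (H : SLData a) {l : List (Fin n)} (hl : Red H.diag l) {i j k : Fin n}
    (hij : a i j = -1) (hik : a i k = 0) (hjk : a j k = 0)
    (hi : (pE H.diag l)⁻¹ (rt i) ≤ 0) (hj : (pE H.diag l)⁻¹ (rt j) ≤ 0)
    (hk : (pE H.diag l)⁻¹ (rt k) ≤ 0) :
    ∃ q, pE H.diag (i :: j :: i :: k :: q) = pE H.diag l ∧ Red H.diag (i :: j :: i :: k :: q) := by
  have hji : a j i = -1 := by rw [H.symm]; exact hij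
  obtain ⟨l1, r1, e1, p1, v1⟩ := peel H hl hi
  obtain ⟨l2, r2, e2, p2, v2⟩ := peel H r1 (i := j) (by
    rw [v1, sE_neg _ hij, map_add]; exact add_nonpos hi hj)
  obtain ⟨l3, r3, e3, p3, v3⟩ := peel H r2 (i := i) (by
    rw [v2, v1, sE_neg _ hji, map_add, sE_self, sE_neg _ hij]; simpa using hj)
  obtain ⟨l4, r4, e4, p4, v4⟩ := peel H r3 (i := k) (by
    rw [v3, v2, v1, sE_zero _ hik, sE_zero _ hjk, sE_zero _ hik]; exact hk)
  exact ⟨l4, finish_red H hl (by rw [p1, p2, p3, p4]; simp) (by simp; omega)⟩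

/-- the word `j i j k j i` for the path `i - j - k`. -/
theorem word_A3 (H : SLData a) {l : List (Fin n)} (hl : Red H.diag l) {i j k : Fin n}
    (hij : a i j = -1) (hik : a i k = 0) (hjk : a j k = -1)
    (hi : (pE H.diag l)⁻¹ (rt i) ≤ 0) (hj : (pE H.diag l)⁻¹ (rt j) ≤ 0)
    (hk : (pE H.diag l)⁻¹ (rt k) ≤ 0) :
    ∃ q, pE H.diag (j :: i :: j :: k :: j :: i :: q) = pE H.diag l ∧
      Red H.diag (j :: i :: j :: k :: j :: i :: q) := by
  have hji : a j i = -1 := by rw [H.symm]; exact hij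
  have hki : a k i = 0 := by rw [H.symm]; exact hik
  have hkj : a k j = -1 := by rw [H.symm]; exact hjk
  have hij' := add_nonpos hi hj
  have hjk' := add_nonpos hj hk
  have hijk' := add_nonpos hi hjk'
  obtain ⟨l1, r1, e1, p1, v1⟩ := peel H hl hj
  have A1 : (pE H.diag l1)⁻¹ (rt i) = (pE H.diag l)⁻¹ (rt i) + (pE H.diag l)⁻¹ (rt j) := by
    rw [v1, sE_neg _ hji, map_add, add_comm]
  have B1 : (pE H.diag l1)⁻¹ (rt j) = - (pE H.diag l)⁻¹ (rt j) := by rw [v1, sE_self, map_neg]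
  have C1 : (pE H.diag l1)⁻¹ (rt k) = (pE H.diag l)⁻¹ (rt j) + (pE H.diag l)⁻¹ (rt k) := by
    rw [v1, sE_neg _ hjk, map_add]
  obtain ⟨l2, r2, e2, p2, v2⟩ := peel H r1 (i := i) (by rw [A1]; exact hij')
  have A2 : (pE H.diag l2)⁻¹ (rt i) = -((pE H.diag l)⁻¹ (rt i) + (pE H.diag l)⁻¹ (rt j)) := by
    rw [v2, sE_self, map_neg, A1]
  have B2 : (pE H.diag l2)⁻¹ (rt j) = (pE H.diag l)⁻¹ (rt i) := by
    rw [v2, sE_neg _ hij, map_add, A1, B1]; abel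
  have C2 : (pE H.diag l2)⁻¹ (rt k) = (pE H.diag l)⁻¹ (rt j) + (pE H.diag l)⁻¹ (rt k) := by
    rw [v2, sE_zero _ hik, C1]
  obtain ⟨l3, r3, e3, p3, v3⟩ := peel H r2 (i := j) (by rw [B2]; exact hi)
  have A3 : (pE H.diag l3)⁻¹ (rt i) = -((pE H.diag l)⁻¹ (rt j)) := by
    rw [v3, sE_neg _ hji, map_add, A2, B2]; abel
  have B3 : (pE H.diag l3)⁻¹ (rt j) = -(pE H.diag l)⁻¹ (rt i) := by
    rw [v3, sE_self, map_neg, B2]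
  have C3 : (pE H.diag l3)⁻¹ (rt k) =
      (pE H.diag l)⁻¹ (rt i) + ((pE H.diag l)⁻¹ (rt j) + (pE H.diag l)⁻¹ (rt k)) := by
    rw [v3, sE_neg _ hjk, map_add, B2, C2]
  obtain ⟨l4, r4, e4, p4, v4⟩ := peel H r3 (i := k) (by rw [C3]; exact hijk')
  have A4 : (pE H.diag l4)⁻¹ (rt i) = -((pE H.diag l)⁻¹ (rt j)) := by
    rw [v4, sE_zero _ hki, A3]
  have B4 : (pE H.diag l4)⁻¹ (rt j) = (pE H.diag l)⁻¹ (rt j) + (pE H.diag l)⁻¹ (rt k) := by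
    rw [v4, sE_neg _ hkj, map_add, B3, C3]; abel
  obtain ⟨l5, r5, e5, p5, v5⟩ := peel H r4 (i := j) (by rw [B4]; exact hjk')
  have A5 : (pE H.diag l5)⁻¹ (rt i) = (pE H.diag l)⁻¹ (rt k) := by
    rw [v5, sE_neg _ hji, map_add, A4, B4]; abel
  obtain ⟨l6, r6, e6, p6, v6⟩ := peel H r5 (i := i) (by rw [A5]; exact hk)
  exact ⟨l6, finish_red H hl (by rw [p1, p2, p3, p4, p5, p6]; simp) (by simp; omega)⟩

/-- decorated move relation -/
inductive Stp (a : Fin n → Fin n → ℤ) : List (Fin n × ℤ) → List (Fin n × ℤ) → Prop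
  | two (i j : Fin n) (x y : ℤ) (q : List (Fin n × ℤ)) : a i j = 0 → a j i = 0 →
      Stp a ((i, x) :: (j, y) :: q) ((j, y) :: (i, x) :: q)
  | three (i j : Fin n) (x y z x' y' z' : ℤ) (q : List (Fin n × ℤ)) : a i j = -1 → a j i = -1 →
      x' = max z (y - x) → y' = x + z → z' = min x (y - z) →
      Stp a ((i, x) :: (j, y) :: (i, z) :: q) ((j, x') :: (i, y') :: (j, z') :: q)
  | cons (p : Fin n × ℤ) (L L' : List (Fin n × ℤ)) : Stp a L L' → Stp a (p :: L) (p :: L')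

theorem Stp.symm {L L' : List (Fin n × ℤ)} (h : Stp a L L') : Stp a L' L := by
  induction h with
  | two i j x y q h h' => exact Stp.two j i y x q h' h
  | three i j x y z x' y' z' q h h' hx hy hz =>
    exact Stp.three j i _ _ _ _ _ _ q h' h (by omega) (by omega) (by omega)
  | cons p L L' _ ih => exact Stp.cons p _ _ ih

/-- equivalence generated by the moves -/
def Eq' (a : Fin n → Fin n → ℤ) : List (Fin n × ℤ) → List (Fin n × ℤ) → Prop :=
  Relation.ReflTransGen (Stp a)

theorem Eq'.refl (L : List (Fin n × ℤ)) : Eq' a L L := Relation.ReflTransGen.refl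

theorem Eq'.trans {L M N : List (Fin n × ℤ)} (h : Eq' a L M) (h' : Eq' a M N) : Eq' a L N :=
  Relation.ReflTransGen.trans h h'

theorem Eq'.symm {L M : List (Fin n × ℤ)} (h : Eq' a L M) : Eq' a M L := by
  induction h with
  | refl => exact Eq'.refl _
  | tail _ h2 ih => exact Eq'.trans (Relation.ReflTransGen.single h2.symm) ih

theorem Eq'.cons {L M : List (Fin n × ℤ)} (p : Fin n × ℤ) (h : Eq' a L M) :
    Eq' a (p :: L) (p :: M) := by
  induction h with
  | refl => exact Eq'.refl _
  | tail _ h2 ih => exact ih.trans (Relation.ReflTransGen.single (Stp.cons p _ _ h2))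

theorem Eq'.two {i j : Fin n} (h : a i j = 0) (h' : a j i = 0) (x y : ℤ)
    (q : List (Fin n × ℤ)) : Eq' a ((i, x) :: (j, y) :: q) ((j, y) :: (i, x) :: q) :=
  Relation.ReflTransGen.single (Stp.two i j x y q h h')

theorem Eq'.three {i j : Fin n} (h : a i j = -1) (h' : a j i = -1) {x y z x' y' z' : ℤ}
    (q : List (Fin n × ℤ)) (hx : x' = max z (y - x)) (hy : y' = x + z)
    (hz : z' = min x (y - z)) :
    Eq' a ((i, x) :: (j, y) :: (i, z) :: q) ((j, x') :: (i, y') :: (j, z') :: q) :=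
  Relation.ReflTransGen.single (Stp.three i j x y z _ _ _ q h h' hx hy hz)

/-- underlying word -/
def wd (L : List (Fin n × ℤ)) : List (Fin n) := L.map Prod.fst

@[simp] theorem wd_nil : wd ([] : List (Fin n × ℤ)) = [] := rfl
@[simp] theorem wd_cons (p : Fin n × ℤ) (L : List (Fin n × ℤ)) :
    wd (p :: L) = p.1 :: wd L := rfl
@[simp] theorem wd_length (L : List (Fin n × ℤ)) : (wd L).length = L.length := by simp [wd]

theorem Stp.inv (hd : ∀ i, a i i = 2) {L L' : List (Fin n × ℤ)} (h : Stp a L L') :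
    pE hd (wd L') = pE hd (wd L) ∧ L'.length = L.length := by
  induction h with
  | two i j x y q h h' =>
    refine ⟨?_, rfl⟩
    simp only [wd_cons, pE_cons, ← mul_assoc]
    rw [sE_comm hd h h']
  | three i j x y z x' y' z' q h h' hx hy hz =>
    refine ⟨?_, rfl⟩
    have := congrArg (· * pE hd (wd q)) (sE_braid hd h h')
    simp only [mul_assoc] at this
    simp only [wd_cons, pE_cons]
    exact this.symm
  | cons p L L' _ ih => exact ⟨by simp [ih.1], by simp [ih.2]⟩

theorem Eq'.inv (hd : ∀ i, a i i = 2) {L L' : List (Fin n × ℤ)} (h : Eq' a L L') :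
    pE hd (wd L') = pE hd (wd L) ∧ L'.length = L.length := by
  induction h with
  | refl => exact ⟨rfl, rfl⟩
  | tail _ h2 ih => exact ⟨(h2.inv hd).1.trans ih.1, (h2.inv hd).2.trans ih.2⟩

theorem Eq'.red (hd : ∀ i, a i i = 2) {L L' : List (Fin n × ℤ)} (h : Eq' a L L')
    (hr : Red hd (wd L)) : Red hd (wd L') :=
  hr.of_le (h.inv hd).1 (by simp [(h.inv hd).2])

theorem pE_tail_eq (hd : ∀ i, a i i = 2) {i : Fin n} {u v : List (Fin n)}
    (h : pE hd (i :: u) = pE hd (i :: v)) : pE hd u = pE hd v := by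
  simpa using h

/-- Tits transport. -/
theorem transport (H : SLData a) : ∀ (N : ℕ) (L : List (Fin n × ℤ)), L.length = N →
    Red H.diag (wd L) → ∀ u, Red H.diag u → pE H.diag u = pE H.diag (wd L) →
    ∃ L', wd L' = u ∧ Eq' a L L' := by
  intro N
  induction N with
  | zero =>
    intro L hN hr u hu he
    have := hr.len_eq hu he
    rw [wd_length, hN] at this
    have hL : L = [] := List.length_eq_zero_iff.1 hN
    have hu' : u = [] := List.length_eq_zero_iff.1 this
    subst hL hu'
    exact ⟨[], rfl, Eq'.refl _⟩
  | succ N ih =>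
    intro L hN hr u hu he
    have hlen := hr.len_eq hu he
    rw [wd_length, hN] at hlen
    match L, hN, u, hlen with
    | (i, x) :: M, hN, j :: v, hlen =>
      simp only [wd_cons] at hr he
      have hM : M.length = N := by simpa using hN
      have hv : v.length = N := by simpa using hlen
      by_cases hij : i = j
      · subst hij
        obtain ⟨M', h1, h2⟩ := ih M hM hr.tail v hu.tail (pE_tail_eq _ he)
        exact ⟨(i, x) :: M', by simp [h1], h2.cons _⟩
      · have hi := neg_of_red H hr
        have hj := neg_of_red H hu
        rw [he] at hj
        rcases H.sl i j hij with h0 | h0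
        · have h0' : a j i = 0 := by rw [H.symm]; exact h0
          obtain ⟨q, hq1, hq2⟩ := word_two H hr h0 hi hj
          obtain ⟨M', h1, h2⟩ := ih M hM hr.tail (j :: q) hq2.tail (pE_tail_eq _ hq1)
          match M', h1 with
          | (j', y) :: Q, h1 =>
            simp only [wd_cons, List.cons.injEq] at h1
            obtain ⟨rfl, h1⟩ := h1
            have E1 : Eq' a ((i, x) :: M) ((j', y) :: (i, x) :: Q) :=
              (h2.cons _).trans (Eq'.two h0 h0' _ _ _)
            have hE := E1.inv H.diag
            obtain ⟨M'', h3, h4⟩ := ih ((i, x) :: Q) (by have := hE.2; simp at this hN ⊢; omega)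
              (E1.red H.diag hr).tail v hu.tail (pE_tail_eq H.diag (i := j') (he.trans hE.1.symm))
            exact ⟨(j', y) :: M'', by simp [h3], E1.trans (h4.cons _)⟩
        · have h0' : a j i = -1 := by rw [H.symm]; exact h0
          obtain ⟨q, hq1, hq2⟩ := word_three H hr h0 hi hj
          obtain ⟨M', h1, h2⟩ := ih M hM hr.tail (j :: i :: q) hq2.tail (pE_tail_eq _ hq1)
          match M', h1 with
          | (j', y) :: (i', z) :: Q, h1 =>
            simp only [wd_cons, List.cons.injEq] at h1
            obtain ⟨rfl, rfl, h1⟩ := h1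
            have E1 : Eq' a ((i', x) :: M) _ :=
              (h2.cons _).trans (Eq'.three h0 h0' Q rfl rfl rfl)
            have hE := E1.inv H.diag
            obtain ⟨M'', h3, h4⟩ := ih _ (by have := hE.2; simp at this hN ⊢; omega)
              (E1.red H.diag hr).tail v hu.tail (pE_tail_eq H.diag (i := j') (he.trans hE.1.symm))
            exact ⟨_ :: M'', by simp [h3], E1.trans (h4.cons _)⟩

/-- Transport of the tail to a given word starting with the same letter. -/
theorem transport_tail (H : SLData a) {i : Fin n} {M : List (Fin n × ℤ)}
    (hr : Red H.diag (i :: wd M)) {u : List (Fin n)} (hu : Red H.diag (i :: u))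
    (he : pE H.diag (i :: u) = pE H.diag (i :: wd M)) : ∃ M', wd M' = u ∧ Eq' a M M' :=
  transport H _ M rfl hr.tail u hu.tail (pE_tail_eq _ he)

/-- The one-jump relation. -/
inductive RR (a : Fin n → Fin n → ℤ) : List (Fin n × ℤ) → List (Fin n × ℤ) → Prop
  | same (i : Fin n) (x y : ℤ) (M M' : List (Fin n × ℤ)) : x = y → Eq' a M M' →
      RR a ((i, x) :: M) ((i, y) :: M')
  | two (i j : Fin n) (x y : ℤ) (M M' Q : List (Fin n × ℤ)) : a i j = 0 → a j i = 0 →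
      Eq' a M ((j, y) :: Q) → Eq' a M' ((i, x) :: Q) → RR a ((i, x) :: M) ((j, y) :: M')
  | three (i j : Fin n) (x y z x' y' z' : ℤ) (M M' Q : List (Fin n × ℤ)) :
      a i j = -1 → a j i = -1 →
      x' = max z (y - x) → y' = x + z → z' = min x (y - z) →
      Eq' a M ((j, y) :: (i, z) :: Q) → Eq' a M' ((i, y') :: (j, z') :: Q) →
      RR a ((i, x) :: M) ((j, x') :: M')

theorem RR.symm {L L' : List (Fin n × ℤ)} (h : RR a L L') : RR a L' L := by
  cases h with
  | same i x y M M' h1 h2 => exact RR.same _ _ _ _ _ h1.symm h2.symm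
  | two i j x y M M' Q h h' h1 h2 => exact RR.two _ _ _ _ _ _ _ h' h h2 h1
  | three i j x y z x' y' z' M M' Q h h' hx hy hz h1 h2 =>
    exact RR.three _ _ _ _ _ _ _ _ _ _ _ h' h (by omega) (by omega) (by omega) h2 h1

theorem Stp.rr {L L' : List (Fin n × ℤ)} (h : Stp a L L') : RR a L L' := by
  cases h with
  | two i j x y q h h' => exact RR.two _ _ _ _ _ _ _ h h' (Eq'.refl _) (Eq'.refl _)
  | three i j x y z x' y' z' q h h' hx hy hz =>
    exact RR.three _ _ _ _ _ _ _ _ _ _ _ h h' hx hy hz (Eq'.refl _) (Eq'.refl _)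
  | cons p L L' h => exact RR.same _ _ _ _ _ rfl (Relation.ReflTransGen.single h)

theorem RR.eq' {L L' : List (Fin n × ℤ)} (h : RR a L L') : Eq' a L L' := by
  cases h with
  | same i x y M M' h1 h2 => subst h1; exact h2.cons _
  | two i j x y M M' Q h h' h1 h2 =>
    exact ((h1.cons _).trans (Eq'.two h h' _ _ _)).trans (h2.symm.cons _)
  | three i j x y z x' y' z' M M' Q h h' hx hy hz h1 h2 =>
    exact ((h1.cons _).trans (Eq'.three h h' _ hx hy hz)).trans (h2.symm.cons _)

theorem RR.absorb {i : Fin n} {x : ℤ} {M M0 L : List (Fin n × ℤ)} (h : RR a ((i, x) :: M) L)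
    (h0 : Eq' a M0 M) : RR a ((i, x) :: M0) L := by
  cases h with
  | same i x y M M' h1 h2 => exact RR.same _ _ _ _ _ h1 (h0.trans h2)
  | two i j x y M M' Q h h' h1 h2 => exact RR.two _ _ _ _ _ _ _ h h' (h0.trans h1) h2
  | three i j x y z x' y' z' M M' Q h h' hx hy hz h1 h2 =>
    exact RR.three _ _ _ _ _ _ _ _ _ _ _ h h' hx hy hz (h0.trans h1) h2

/-- Cancellation property in length `< N`. -/
def Canc (hd : ∀ i, a i i = 2) (N : ℕ) : Prop :=
  ∀ (i : Fin n) (x y : ℤ) (M M' : List (Fin n × ℤ)), M.length + 1 < N → Red hd (i :: wd M) →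
    Eq' a ((i, x) :: M) ((i, y) :: M') → x = y ∧ Eq' a M M'

theorem RR.same_inv (H : SLData a) {i : Fin n} {x y : ℤ} {M M' : List (Fin n × ℤ)}
    (h : RR a ((i, x) :: M) ((i, y) :: M')) : x = y ∧ Eq' a M M' := by
  have := H.diag i
  cases h with
  | same i x y M M' h1 h2 => exact ⟨h1, h2⟩
  | two i j x y M M' Q h h' h1 h2 => omega
  | three i j x y z x' y' z' M M' Q h h' hx hy hz h1 h2 => omega

theorem RR.aba (H : SLData a) {N : ℕ} (hC : Canc H.diag N) {i j : Fin n} {x x' y : ℤ}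
    {M M' M'' : List (Fin n × ℤ)} (hij : i ≠ j) (hN : M'.length < N)
    (hr : Red H.diag (j :: wd M'))
    (h1 : RR a ((i, x) :: M) ((j, y) :: M')) (h2 : RR a ((j, y) :: M') ((i, x') :: M'')) :
    x = x' ∧ Eq' a M M'' := by
  cases h1 with
  | same => exact absurd rfl hij
  | two _ _ _ _ _ _ Q h h' h3 h4 =>
    cases h2 with
    | same => exact absurd rfl hij
    | two _ _ _ _ _ _ Q' k k' h5 h6 =>
      have h7 := h4.inv H.diag
      have h8 := hC i _ _ _ _ (by simp at h7; omega) (h4.red H.diag hr.tail) (h4.symm.trans h5)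
      exact ⟨h8.1, (h3.trans (h8.2.cons _)).trans h6.symm⟩
    | three => omega
  | three _ _ _ y0 z _ y' z' _ _ Q h h' hx hy hz h3 h4 =>
    cases h2 with
    | same => exact absurd rfl hij
    | two => omega
    | three _ _ _ Y Z _ Y' Z' _ _ Q' k k' kx ky kz h5 h6 =>
      have h7 := h4.inv H.diag
      have hr' := h4.red H.diag hr.tail
      simp only [List.length_cons] at h7
      have h8 := hC i _ _ _ _ (by simp; omega) hr' (h4.symm.trans h5)
      have h9 := hC j _ _ _ _ (by omega) hr'.tail h8.2
      have e1 : x = x' := by omega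
      have e2 : y0 = Y' := by omega
      have e3 : z = Z' := by omega
      subst e1 e2 e3
      exact ⟨rfl, (h3.trans ((h9.2.cons _).cons _)).trans h6.symm⟩

/-- triangle property with base letter `j` -/
def Tri (H : SLData a) (N : ℕ) (j i k : Fin n) : Prop :=
  ∀ (x : ℤ) (M : List (Fin n × ℤ)), M.length < N → Red H.diag (j :: wd M) →
    (pE H.diag (j :: wd M))⁻¹ (rt i) ≤ 0 → (pE H.diag (j :: wd M))⁻¹ (rt k) ≤ 0 →
    ∃ y z P Q, RR a ((j, x) :: M) ((i, y) :: P) ∧ RR a ((j, x) :: M) ((k, z) :: Q) ∧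
      RR a ((i, y) :: P) ((k, z) :: Q)

theorem Tri.swap {H : SLData a} {N : ℕ} {j i k : Fin n} (h : Tri H N j i k) : Tri H N j k i := by
  intro x M hM hr hi hk
  obtain ⟨y, z, P, Q, h1, h2, h3⟩ := h x M hM hr hk hi
  exact ⟨z, y, Q, P, h2, h1, h3.symm⟩

theorem RR.exists (H : SLData a) {i j : Fin n} (hij : i ≠ j) {x : ℤ} {M : List (Fin n × ℤ)}
    (hr : Red H.diag (j :: wd M)) (hi : (pE H.diag (j :: wd M))⁻¹ (rt i) ≤ 0) :
    ∃ y P, RR a ((j, x) :: M) ((i, y) :: P) := by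
  have hj := neg_of_red H hr
  rcases H.sl j i hij.symm with h0 | h0
  · have h0' : a i j = 0 := by rw [H.symm]; exact h0
    obtain ⟨q, hq1, hq2⟩ := word_two H hr h0 hj hi
    obtain ⟨M', h1, h2⟩ := transport_tail H hr hq2 hq1
    match M', h1 with
    | (i', y) :: Q, h1 =>
      simp only [wd_cons, List.cons.injEq] at h1
      obtain ⟨rfl, h1⟩ := h1
      exact ⟨_, _, RR.two _ _ _ _ _ _ _ h0 h0' h2 (Eq'.refl _)⟩
  · have h0' : a i j = -1 := by rw [H.symm]; exact h0
    obtain ⟨q, hq1, hq2⟩ := word_three H hr h0 hj hi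
    obtain ⟨M', h1, h2⟩ := transport_tail H hr hq2 hq1
    match M', h1 with
    | (i', y) :: (j', z) :: Q, h1 =>
      simp only [wd_cons, List.cons.injEq] at h1
      obtain ⟨rfl, rfl, h1⟩ := h1
      exact ⟨_, _, RR.three _ _ _ _ _ _ _ _ _ _ _ h0 h0' rfl rfl rfl h2 (Eq'.refl _)⟩

theorem Tri.rebase {H : SLData a} {N : ℕ} (hC : Canc H.diag N) {j i k : Fin n} (hij : i ≠ j)
    (h : Tri H N j i k) : Tri H N i j k := by
  intro x M hM hr hj hk
  obtain ⟨y, P, h1⟩ := RR.exists H hij.symm (x := x) hr hj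
  have hI := h1.eq'.inv H.diag
  have hP : Red H.diag (j :: wd P) := h1.eq'.red H.diag hr
  have hi := neg_of_red H hr
  have hp : pE H.diag (j :: wd P) = pE H.diag (i :: wd M) := hI.1
  have hl : P.length < N := by have := hI.2; simp at this; omega
  obtain ⟨x', z, M', Q, h2, h3, h4⟩ := h y P hl hP (by rw [hp]; exact hi) (by rw [hp]; exact hk)
  obtain ⟨rfl, h5⟩ := RR.aba H hC hij hl hP h1 h2
  exact ⟨y, z, P, Q, h1, h4.absorb h5, h3⟩

theorem tri_111 (H : SLData a) (N : ℕ) {j i k : Fin n} (hji : a j i = 0) (hjk : a j k = 0)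
    (hik : a i k = 0) : Tri H N j i k := by
  intro x M hM hr hi hk
  have hij : a i j = 0 := by rw [H.symm]; exact hji
  have hkj : a k j = 0 := by rw [H.symm]; exact hjk
  have hki : a k i = 0 := by rw [H.symm]; exact hik
  obtain ⟨q, hq1, hq2⟩ := word_111 H hr hji hjk hik (neg_of_red H hr) hi hk
  obtain ⟨M', h1, h2⟩ := transport_tail H hr hq2 hq1
  match M', h1 with
  | (i', y) :: (k', z) :: Q, h1 =>
    simp only [wd_cons, List.cons.injEq] at h1
    obtain ⟨rfl, rfl, h1⟩ := h1
    refine ⟨y, z, (j, x) :: (k', z) :: Q, (j, x) :: (i', y) :: Q, ?_, ?_, ?_⟩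
    · exact RR.two _ _ _ _ _ _ _ hji hij h2 (Eq'.refl _)
    · exact RR.two _ _ _ _ _ _ _ hjk hkj (h2.trans (Eq'.two hik hki _ _ _)) (Eq'.refl _)
    · exact RR.two _ _ _ _ _ _ ((j, x) :: Q) hik hki (Eq'.two hjk hkj _ _ _)
        (Eq'.two hji hij _ _ _)

/-- `j - k` joined, `i` isolated. -/
theorem tri_21 (H : SLData a) (N : ℕ) {j i k : Fin n} (hji : a j i = 0) (hjk : a j k = -1)
    (hik : a i k = 0) : Tri H N j i k := by
  intro x M hM hr hi hk
  have hij : a i j = 0 := by rw [H.symm]; exact hji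
  have hkj : a k j = -1 := by rw [H.symm]; exact hjk
  have hki : a k i = 0 := by rw [H.symm]; exact hik
  obtain ⟨q, hq1, hq2⟩ := word_21 H hr hjk hji hki (neg_of_red H hr) hk hi
  obtain ⟨M', h1, h2⟩ := transport_tail H hr hq2 hq1
  match M', h1 with
  | (k', y) :: (j', z) :: (i', t) :: Q, h1 =>
    simp only [wd_cons, List.cons.injEq] at h1
    obtain ⟨rfl, rfl, rfl, h1⟩ := h1
    refine ⟨t, max z (y - x), (j', x) :: (k', y) :: (j', z) :: Q,
      (j', x + z) :: (k', min x (y - z)) :: (i', t) :: Q, ?_, ?_, ?_⟩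
    swap
    · exact RR.three _ _ _ _ _ _ _ _ _ _ _ hjk hkj rfl rfl rfl h2 (Eq'.refl _)
    · exact RR.two _ _ _ _ _ _ ((k', y) :: (j', z) :: Q) hji hij
        (h2.trans (((Eq'.two hji hij _ _ _).cons _).trans (Eq'.two hki hik _ _ _))) (Eq'.refl _)
    · exact RR.two _ _ _ _ _ _ ((j', x + z) :: (k', min x (y - z)) :: Q) hik hki
        (Eq'.three hjk hkj _ rfl rfl rfl)
        (((Eq'.two hki hik _ _ _).cons _).trans (Eq'.two hji hij _ _ _))

theorem mv_cases {x y z x' z' : ℤ} (hx : x' = max z (y - x)) (hz : z' = min x (y - z)) :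
    (x' = z ∧ z' = y - z ∧ y ≤ x + z) ∨ (x' = y - x ∧ z' = x ∧ x + z < y) := by
  omega

set_option maxHeartbeats 4000000 in
theorem tetra (x1 x2 x3 x4 x5 x6 p1 p2 p3 r1 r2 r3 s1 s2 s3 t1 t2 t3 u1 u2 u3 v1 v2 v3 w1 w2 w3
    z1 z2 z3 : ℤ)
    (hp1 : p1 = max x3 (x2 - x1)) (hp2 : p2 = x1 + x3) (hp3 : p3 = min x1 (x2 - x3))
    (hr1 : r1 = max x6 (x5 - p3)) (hr2 : r2 = p3 + x6) (hr3 : r3 = min p3 (x5 - x6))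
    (hs1 : s1 = max r1 (x4 - p2)) (hs2 : s2 = p2 + r1) (hs3 : s3 = min p2 (x4 - r1))
    (ht1 : t1 = max x5 (x4 - x3)) (ht2 : t2 = x3 + x5) (ht3 : t3 = min x3 (x4 - x5))
    (hu1 : u1 = max x6 (t2 - x2)) (hu2 : u2 = x2 + x6) (hu3 : u3 = min x2 (t2 - x6))
    (hv1 : v1 = max u1 (t1 - x1)) (hv2 : v2 = x1 + u1) (hv3 : v3 = min x1 (t1 - u1))
    (hw1 : w1 = max t3 (u3 - v3)) (hw2 : w2 = v3 + t3) (hw3 : w3 = min v3 (u3 - t3))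
    (hz1 : z1 = max w1 (u2 - v2)) (hz2 : z2 = v2 + w1) (hz3 : z3 = min v2 (u2 - w1)) :
    s1 = v1 ∧ p1 = z1 ∧ s2 = z2 ∧ s3 = w2 ∧ r2 = z3 ∧ r3 = w3 := by
  have A := mv_cases hp1 hp3
  have B := mv_cases hr1 hr3
  have C := mv_cases hs1 hs3
  have D := mv_cases ht1 ht3
  have E := mv_cases hu1 hu3
  have F := mv_cases hv1 hv3
  have G := mv_cases hw1 hw3
  have K := mv_cases hz1 hz3
  clear hp1 hp3 hr1 hr3 hs1 hs3 ht1 ht3 hu1 hu3 hv1 hv3 hw1 hw3 hz1 hz3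
  subst hp2 hr2 hs2 ht2 hu2 hv2 hw2 hz2
  rcases A with ⟨rfl, rfl, A⟩ | ⟨rfl, rfl, A⟩ <;> rcases B with ⟨rfl, rfl, B⟩ | ⟨rfl, rfl, B⟩ <;>
  rcases D with ⟨rfl, rfl, D⟩ | ⟨rfl, rfl, D⟩ <;> rcases E with ⟨rfl, rfl, E⟩ | ⟨rfl, rfl, E⟩ <;>
  first
  | (exfalso; omega)
  | (rcases C with ⟨rfl, rfl, C⟩ | ⟨rfl, rfl, C⟩ <;> rcases F with ⟨rfl, rfl, F⟩ | ⟨rfl, rfl, F⟩ <;>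
      first
      | (exfalso; omega)
      | (rcases G with ⟨rfl, rfl, G⟩ | ⟨rfl, rfl, G⟩ <;>
         rcases K with ⟨rfl, rfl, K⟩ | ⟨rfl, rfl, K⟩ <;>
         first
         | (exfalso; omega)
         | (refine ⟨?_, ?_, ?_, ?_, ?_, ?_⟩ <;> omega)))

/-- `i - j - k` a path with middle `j`. -/
theorem tri_A3 (H : SLData a) (N : ℕ) {j i k : Fin n} (hji : a j i = -1) (hjk : a j k = -1)
    (hik : a i k = 0) : Tri H N j i k := by
  intro x1 M hM hr hi hk
  have hij : a i j = -1 := by rw [H.symm]; exact hji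
  have hkj : a k j = -1 := by rw [H.symm]; exact hjk
  have hki : a k i = 0 := by rw [H.symm]; exact hik
  obtain ⟨q, hq1, hq2⟩ := word_A3 H hr hij hik hjk hi (neg_of_red H hr) hk
  obtain ⟨M', h1, h2⟩ := transport_tail H hr hq2 hq1
  match M', h1 with
  | (_, x2) :: (_, x3) :: (_, x4) :: (_, x5) :: (_, x6) :: Q, h1 =>
    simp only [wd_cons, List.cons.injEq] at h1
    obtain ⟨e1, e2, e3, e4, e5, h1⟩ := h1
    rw [e1, e2, e3, e4, e5] at h2
    obtain ⟨p1, hp1⟩ : ∃ p, p = max x3 (x2 - x1) := ⟨_, rfl⟩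
    obtain ⟨p2, hp2⟩ : ∃ p, p = x1 + x3 := ⟨_, rfl⟩
    obtain ⟨p3, hp3⟩ : ∃ p, p = min x1 (x2 - x3) := ⟨_, rfl⟩
    obtain ⟨r1, hr1⟩ : ∃ p, p = max x6 (x5 - p3) := ⟨_, rfl⟩
    obtain ⟨r2, hr2⟩ : ∃ p, p = p3 + x6 := ⟨_, rfl⟩
    obtain ⟨r3, hr3⟩ : ∃ p, p = min p3 (x5 - x6) := ⟨_, rfl⟩
    obtain ⟨s1, hs1⟩ : ∃ p, p = max r1 (x4 - p2) := ⟨_, rfl⟩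
    obtain ⟨s2, hs2⟩ : ∃ p, p = p2 + r1 := ⟨_, rfl⟩
    obtain ⟨s3, hs3⟩ : ∃ p, p = min p2 (x4 - r1) := ⟨_, rfl⟩
    obtain ⟨t1, ht1⟩ : ∃ p, p = max x5 (x4 - x3) := ⟨_, rfl⟩
    obtain ⟨t2, ht2⟩ : ∃ p, p = x3 + x5 := ⟨_, rfl⟩
    obtain ⟨t3, ht3⟩ : ∃ p, p = min x3 (x4 - x5) := ⟨_, rfl⟩
    obtain ⟨u1, hu1⟩ : ∃ p, p = max x6 (t2 - x2) := ⟨_, rfl⟩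
    obtain ⟨u2, hu2⟩ : ∃ p, p = x2 + x6 := ⟨_, rfl⟩
    obtain ⟨u3, hu3⟩ : ∃ p, p = min x2 (t2 - x6) := ⟨_, rfl⟩
    obtain ⟨v1, hv1⟩ : ∃ p, p = max u1 (t1 - x1) := ⟨_, rfl⟩
    obtain ⟨v2, hv2⟩ : ∃ p, p = x1 + u1 := ⟨_, rfl⟩
    obtain ⟨v3, hv3⟩ : ∃ p, p = min x1 (t1 - u1) := ⟨_, rfl⟩
    obtain ⟨w1, hw1⟩ : ∃ p, p = max t3 (u3 - v3) := ⟨_, rfl⟩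
    obtain ⟨w2, hw2⟩ : ∃ p, p = v3 + t3 := ⟨_, rfl⟩
    obtain ⟨w3, hw3⟩ : ∃ p, p = min v3 (u3 - t3) := ⟨_, rfl⟩
    obtain ⟨z1, hz1⟩ : ∃ p, p = max w1 (u2 - v2) := ⟨_, rfl⟩
    obtain ⟨z2, hz2⟩ : ∃ p, p = v2 + w1 := ⟨_, rfl⟩
    obtain ⟨z3, hz3⟩ : ∃ p, p = min v2 (u2 - w1) := ⟨_, rfl⟩
    obtain ⟨f1, f2, f3, f4, f5, f6⟩ := tetra x1 x2 x3 x4 x5 x6 p1 p2 p3 r1 r2 r3 s1 s2 s3 t1 t2 t3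
      u1 u2 u3 v1 v2 v3 w1 w2 w3 z1 z2 z3 hp1 hp2 hp3 hr1 hr2 hr3 hs1 hs2 hs3 ht1 ht2 ht3
      hu1 hu2 hu3 hv1 hv2 hv3 hw1 hw2 hw3 hz1 hz2 hz3
    -- tail of the `j` word, second form
    have T : Eq' a M ((k, t1) :: (j, u1) :: (i, u2) :: (j, u3) :: (k, t3) :: Q) := by
      refine h2.trans ?_
      refine ((Eq'.three hjk hkj ((i, x6) :: Q) ht1 ht2 ht3).cons _).trans ?_
      refine (Eq'.two hik hki _ _ _).trans (Eq'.cons _ ?_)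
      refine (((Eq'.two hki hik _ _ _).cons _).cons _).trans ?_
      exact Eq'.three hij hji _ hu1 hu2 hu3
    -- tail of the `i` word
    have TI : Eq' a ((j, p2) :: (i, p3) :: (k, x4) :: (j, x5) :: (i, x6) :: Q)
        ((k, s1) :: (j, s2) :: (k, s3) :: (i, r2) :: (j, r3) :: Q) := by
      refine ((Eq'.two hik hki _ _ _).cons _).trans ?_
      refine (((Eq'.three hij hji _ hr1 hr2 hr3).cons _).cons _).trans ?_
      exact Eq'.three hjk hkj _ hs1 hs2 hs3
    -- tail of the `k` word
    have TK : Eq' a ((j, v2) :: (k, v3) :: (i, u2) :: (j, u3) :: (k, t3) :: Q)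
        ((i, z1) :: (j, z2) :: (k, w2) :: (i, z3) :: (j, w3) :: Q) := by
      refine ((Eq'.two hki hik _ _ _).cons _).trans ?_
      refine (((Eq'.three hkj hjk _ hw1 hw2 hw3).cons _).cons _).trans ?_
      refine (Eq'.three hji hij _ hz1 hz2 hz3).trans ?_
      exact ((Eq'.two hik hki _ _ _).cons _).cons _
    refine ⟨p1, v1, (j, p2) :: (i, p3) :: (k, x4) :: (j, x5) :: (i, x6) :: Q,
      (j, v2) :: (k, v3) :: (i, u2) :: (j, u3) :: (k, t3) :: Q, ?_, ?_, ?_⟩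
    · exact RR.three _ _ _ _ _ _ _ _ _ _ _ hji hij hp1 hp2 hp3 h2 (Eq'.refl _)
    · exact RR.three _ _ _ _ _ _ _ _ _ _ _ hjk hkj hv1 hv2 hv3 T (Eq'.refl _)
    · rw [← f1, ← f2, ← f3, ← f4, ← f5, ← f6] at *
      exact RR.two _ _ _ _ _ _ _ hik hki TI TK

theorem tri_all (H : SLData a) {N : ℕ} (hC : Canc H.diag N) {i j k : Fin n} (hij : i ≠ j)
    (hjk : j ≠ k) (hik : i ≠ k) : Tri H N j i k := by
  have sij := H.symm i j
  have sik := H.symm i k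
  have sjk := H.symm j k
  rcases H.sl i j hij with h1 | h1 <;> rcases H.sl j k hjk with h2 | h2 <;>
    rcases H.sl i k hik with h3 | h3
  · exact tri_111 H N (by omega) (by omega) (by omega)
  · exact (tri_21 H N (j := i) (i := j) (k := k) (by omega) (by omega) (by omega)).rebase hC hij.symm
  · exact tri_21 H N (by omega) (by omega) (by omega)
  · exact ((tri_A3 H N (j := k) (i := j) (k := i) (by omega) (by omega) (by omega)).rebase hC
      hjk).swap
  · exact (tri_21 H N (j := j) (i := k) (k := i) (by omega) (by omega) (by omega)).swap
  · exact (tri_A3 H N (j := i) (i := j) (k := k) (by omega) (by omega) (by omega)).rebase hC hij.symm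
  · exact tri_A3 H N (by omega) (by omega) (by omega)
  · exact (H.notri i j k h1 h2 h3).elim

theorem RR.ne_nil {L L' : List (Fin n × ℤ)} (h : RR a L L') :
    ∃ i x M j y M', L = (i, x) :: M ∧ L' = (j, y) :: M' := by
  cases h <;> exact ⟨_, _, _, _, _, _, rfl, rfl⟩

theorem RR.trans (H : SLData a) {N : ℕ} (hC : Canc H.diag N) {L L' L'' : List (Fin n × ℤ)}
    (h : RR a L L') (h' : RR a L' L'') (hr : Red H.diag (wd L)) (hN : L.length ≤ N) :
    RR a L L'' := by
  obtain ⟨i, x, M, j, y, M', rfl, rfl⟩ := h.ne_nil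
  obtain ⟨_, _, _, k, z, M'', he, rfl⟩ := h'.ne_nil
  clear he
  have hI := h.eq'.inv H.diag
  have hI' := h'.eq'.inv H.diag
  have hr' := h.eq'.red H.diag hr
  have hr'' := h'.eq'.red H.diag hr'
  simp only [List.length_cons, wd_cons] at *
  by_cases hij : i = j
  · subst hij
    obtain ⟨rfl, h1⟩ := h.same_inv H
    exact h'.absorb h1
  by_cases hjk : j = k
  · subst hjk
    obtain ⟨rfl, h1⟩ := h'.same_inv H
    exact (h.symm.absorb h1.symm).symm
  by_cases hik : i = k
  · subst hik
    obtain ⟨h1, h2⟩ := RR.aba H hC hij (by omega) hr' h h'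
    exact RR.same _ _ _ _ _ h1 h2
  have hi := neg_of_red H hr
  have hk := neg_of_red H hr''
  rw [← hI.1] at hi
  rw [hI'.1] at hk
  obtain ⟨y1, z1, P, Q, h1, h2, h3⟩ := tri_all H hC hij hjk hik y M' (by omega) hr' hi hk
  obtain ⟨rfl, h4⟩ := RR.aba H hC hij (by omega) hr' h h1
  obtain ⟨rfl, h5⟩ := RR.aba H hC (Ne.symm hjk) (by omega) hr' h'.symm h2
  exact ((h3.absorb h4).symm.absorb h5).symm

theorem canc (H : SLData a) : ∀ N, Canc H.diag N := by
  intro N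
  induction N with
  | zero => intro i x y M M' h; omega
  | succ N hC =>
    intro i x y M M' hM hr hE
    have key : ∀ L', Eq' a ((i, x) :: M) L' → RR a ((i, x) :: M) L' := by
      intro L' h
      induction h with
      | refl => exact RR.same _ _ _ _ _ rfl (Eq'.refl _)
      | tail _ h2 ih => exact RR.trans H hC ih h2.rr hr (by simp; omega)
    exact (key _ hE).same_inv H

theorem stp_two_at {i j : Fin n} {x y : ℤ} (h : a i j = 0) (h' : a j i = 0) :
    ∀ (p : ℕ) (l l' : List (Fin n × ℤ)), l[p]? = some (i, x) → l[p+1]? = some (j, y) →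
    l'[p]? = some (j, y) → l'[p+1]? = some (i, x) →
    (∀ q, q ≠ p → q ≠ p + 1 → l'[q]? = l[q]?) → Stp a l l' := by
  intro p
  induction p with
  | zero =>
    intro l l' h1 h2 h3 h4 h5
    match l, l' with
    | [], _ => simp at h1
    | [_], _ => simp at h2
    | _ :: _ :: _, [] => simp at h3
    | _ :: _ :: _, [_] => simp at h4
    | A :: B :: t, A' :: B' :: t' =>
      simp at h1 h2 h3 h4
      have : t' = t := by
        apply List.ext_getElem?
        intro q
        simpa using h5 (q + 2) (by omega) (by omega)
      subst h1 h2 h3 h4 this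
      exact Stp.two _ _ _ _ _ h h'
  | succ p ih =>
    intro l l' h1 h2 h3 h4 h5
    match l, l' with
    | [], _ => simp at h1
    | _ :: _, [] => simp at h3
    | A :: t, A' :: t' =>
      have h0 := h5 0 (by omega) (by omega)
      simp at h0
      subst h0
      refine Stp.cons _ _ _ (ih t t' (by simpa using h1) (by simpa using h2) (by simpa using h3)
        (by simpa using h4) ?_)
      intro q hq hq'
      simpa using h5 (q + 1) (by omega) (by omega)

theorem stp_three_at {i j : Fin n} {x y z x' y' z' : ℤ} (h : a i j = -1) (h' : a j i = -1)
    (hx : x' = max z (y - x)) (hy : y' = x + z) (hz : z' = min x (y - z)) :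
    ∀ (p : ℕ) (l l' : List (Fin n × ℤ)), l[p]? = some (i, x) → l[p+1]? = some (j, y) →
    l[p+2]? = some (i, z) →
    l'[p]? = some (j, x') → l'[p+1]? = some (i, y') → l'[p+2]? = some (j, z') →
    (∀ q, q ≠ p → q ≠ p + 1 → q ≠ p + 2 → l'[q]? = l[q]?) → Stp a l l' := by
  intro p
  induction p with
  | zero =>
    intro l l' h1 h2 h2' h3 h4 h4' h5
    match l, l' with
    | [], _ => simp at h1
    | [_], _ => simp at h2
    | [_, _], _ => simp at h2'
    | _ :: _ :: _ :: _, [] => simp at h3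
    | _ :: _ :: _ :: _, [_] => simp at h4
    | _ :: _ :: _ :: _, [_, _] => simp at h4'
    | A :: B :: C :: t, A' :: B' :: C' :: t' =>
      simp at h1 h2 h2' h3 h4 h4'
      have : t' = t := by
        apply List.ext_getElem?
        intro q
        simpa using h5 (q + 3) (by omega) (by omega) (by omega)
      subst h1 h2 h2' h3 h4 h4' this
      exact Stp.three _ _ _ _ _ _ _ _ _ h h' hx hy hz
  | succ p ih =>
    intro l l' h1 h2 h2' h3 h4 h4' h5
    match l, l' with
    | [], _ => simp at h1
    | _ :: _, [] => simp at h3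
    | A :: t, A' :: t' =>
      have h0 := h5 0 (by omega) (by omega) (by omega)
      simp at h0
      subst h0
      refine Stp.cons _ _ _ (ih t t' (by simpa using h1) (by simpa using h2) (by simpa using h2')
        (by simpa using h3) (by simpa using h4) (by simpa using h4') ?_)
      intro q hq hq' hq''
      simpa using h5 (q + 1) (by omega) (by omega) (by omega)

/-- decorated word -/
def deco {k : ℕ} (w : Fin k → Fin n) (x : Fin k → ℤ) : List (Fin n × ℤ) :=
  List.ofFn (fun q => (w q, x q))

theorem deco_get {k : ℕ} (w : Fin k → Fin n) (x : Fin k → ℤ) (q : ℕ) (h : q < k) :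
    (deco w x)[q]? = some (w ⟨q, h⟩, x ⟨q, h⟩) := by
  simp [deco, List.getElem?_ofFn, h]

theorem deco_get_none {k : ℕ} (w : Fin k → Fin n) (x : Fin k → ℤ) (q : ℕ) (h : ¬ q < k) :
    (deco w x)[q]? = none := by
  simp [deco, List.getElem?_ofFn, h]

theorem move_stp {k : ℕ} (w : Fin k → Fin n) (x : Fin k → ℤ) (m : BMove)
    (hv : ValidMove a w m) : Stp a (deco w x) (deco (moveWord w m) (moveZ x m)) := by
  cases m with
  | two p =>
    obtain ⟨hp, h1, h2⟩ := hv
    have hp' : p < k := by omega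
    refine stp_two_at h1 h2 p _ _ (deco_get _ _ _ _) (deco_get _ _ _ _) ?_ ?_ ?_
    · rw [deco_get _ _ _ hp']
      simp [moveWord, moveZ, hp]
    · rw [deco_get _ _ _ hp]
      simp [moveWord, moveZ, hp']
    · intro q h3 h4
      by_cases hq : q < k
      · rw [deco_get _ _ _ hq, deco_get _ _ _ hq]
        simp [moveWord, moveZ, h3, h4]
      · rw [deco_get_none _ _ _ hq, deco_get_none _ _ _ hq]
  | three p =>
    obtain ⟨hp2, h0, h1, h2⟩ := hv
    have hp : p + 1 < k := by omega
    have hp' : p < k := by omega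
    refine stp_three_at (x := x ⟨p, hp'⟩) (y := x ⟨p + 1, hp⟩) (z := x ⟨p + 2, hp2⟩)
      h1 h2 rfl rfl rfl p _ _ (deco_get _ _ _ _) (deco_get _ _ _ _) ?_ ?_ ?_ ?_ ?_
    · rw [deco_get _ _ _ hp2, h0]
    · rw [deco_get _ _ _ hp']
      simp [moveWord, moveZ, hp, hp2]
    · rw [deco_get _ _ _ hp]
      simp [moveWord, moveZ, hp', hp2]
    · rw [deco_get _ _ _ hp2]
      simp [moveWord, moveZ, hp, hp2]
    · intro q h3 h4 h5
      by_cases hq : q < k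
      · rw [deco_get _ _ _ hq, deco_get _ _ _ hq]
        simp [moveWord, moveZ, h3, h4, h5, hp2]
      · rw [deco_get_none _ _ _ hq, deco_get_none _ _ _ hq]

theorem seq_eq' {k : ℕ} (w : Fin k → Fin n) (ms : List BMove) (hv : ValidSeq a w ms) :
    ∀ x : Fin k → ℤ, Eq' a (deco w x) (deco (wordAfter w ms) (zAfter x ms)) := by
  induction hv with
  | nil w => intro x; exact Eq'.refl _
  | cons w m ms h _ ih =>
    intro x
    exact Eq'.trans (Relation.ReflTransGen.single (move_stp w x m h)) (ih (moveZ x m))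

theorem no_triangle (hd : ∀ i, a i i = 2) (hs : ∀ i j, a i j = a j i)
    (hfin : Set.Finite {w : (Fin n → ℚ) → (Fin n → ℚ) | ∃ l : List (Fin n), w = wProd a l})
    (i j k : Fin n) (hij : a i j = -1) (hjk : a j k = -1) (hik : a i k = -1) : False := by
  have hji : a j i = -1 := by rw [hs]; exact hij
  have hkj : a k j = -1 := by rw [hs]; exact hjk
  have hki : a k i = -1 := by rw [hs]; exact hik
  have hki' : i ≠ k := by rintro rfl; have := hd i; omega
  have hkj' : j ≠ k := by rintro rfl; have := hd j; omega
  let t := pE hd [k, i, j, i]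
  have ht1 : t (rt k) = rt k + (2 : ℚ) • (rt i + rt j + rt k) := by
    simp only [t, pE_cons, pE_nil, LinearEquiv.mul_apply, LinearEquiv.coe_one, id, mul_one,
      sE_neg hd hik, sE_neg hd hjk, sE_neg hd hij, sE_neg hd hji, sE_neg hd hki, sE_neg hd hkj,
      sE_self, map_add, map_neg]
    module
  have ht2 : t (rt i + rt j + rt k) = rt i + rt j + rt k := by
    simp only [t, pE_cons, pE_nil, LinearEquiv.mul_apply, LinearEquiv.coe_one, id, mul_one,
      sE_neg hd hik, sE_neg hd hjk, sE_neg hd hij, sE_neg hd hji, sE_neg hd hki, sE_neg hd hkj,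
      sE_self, map_add, map_neg]
    module
  have hpow : ∀ m : ℕ, (t ^ m) (rt k) = rt k + (2 * m : ℚ) • (rt i + rt j + rt k) := by
    intro m
    induction m with
    | zero => simp
    | succ m ih =>
      rw [pow_succ', LinearEquiv.mul_apply, ih, map_add, map_smul, ht1, ht2]
      push_cast
      module
  have hex : ∀ m : ℕ, ∃ l, pE hd l = t ^ m := by
    intro m
    induction m with
    | zero => exact ⟨[], by simp⟩
    | succ m ih =>
      obtain ⟨l, hl⟩ := ih
      exact ⟨[k, i, j, i] ++ l, by rw [pow_succ', ← hl]; simp [pE, t, mul_assoc]⟩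
  have hinj : Function.Injective (fun m : ℕ => (⇑(t ^ m) : (Fin n → ℚ) → (Fin n → ℚ))) := by
    intro m m' h
    have h1 := congrFun (congrFun h (rt k)) k
    simp only [hpow] at h1
    simp [rt, hki', hkj', Pi.single_apply, Ne.symm hki', Ne.symm hkj'] at h1
    exact_mod_cast h1
  refine Set.infinite_of_injective_forall_mem hinj ?_ hfin
  intro m
  obtain ⟨l, hl⟩ := hex m
  exact ⟨l, by rw [← hl, pE_coe]⟩

end Aux

/-- If two sequences of 2-moves and 3-moves transform the
reduced word `ι` into words with the same first letter, then the corresponding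
compositions of associated piecewise-linear maps agree in the first
coordinate. -/
theorem moves_first_coordinate_agree {n k : ℕ} (C : SimpleCartanMatrix n)
    (hsl : ∀ i j, i ≠ j → C.a i j = 0 ∨ C.a i j = -1)
    (ι : Fin k → Fin n) (hred : IsReducedList C.a (List.ofFn ι)) (hk : 0 < k)
    (ms₁ ms₂ : List BMove)
    (hval₁ : ValidSeq C.a ι ms₁) (hval₂ : ValidSeq C.a ι ms₂)
    (hfirst : wordAfter ι ms₁ ⟨0, hk⟩ = wordAfter ι ms₂ ⟨0, hk⟩) :
    ∀ x : Fin k → ℤ, zAfter x ms₁ ⟨0, hk⟩ = zAfter x ms₂ ⟨0, hk⟩ := by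
  intro x
  have hsymm : ∀ i j, C.a i j = C.a j i := by
    intro i j
    by_cases hij : i = j
    · rw [hij]
    rcases hsl i j hij with h | h <;> rcases hsl j i (Ne.symm hij) with h' | h'
    · rw [h, h']
    · have := C.zero_symm i j h; omega
    · have := C.zero_symm j i h'; omega
    · rw [h, h']
  have H : SLData C.a := ⟨C.diag, hsymm, hsl, no_triangle C.diag hsymm C.finiteWeyl⟩
  have E1 := seq_eq' ι ms₁ hval₁ x
  have E2 := seq_eq' ι ms₂ hval₂ x
  have hr : Red H.diag (wd (deco ι x)) := by
    rw [red_iff]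
    have : wd (deco ι x) = List.ofFn ι := by
      simp only [wd, deco, List.map_ofFn]
      rfl
    rw [this]
    exact hred
  have hr1 := E1.red H.diag hr
  have E := E1.symm.trans E2
  obtain ⟨m, rfl⟩ : ∃ m, k = m + 1 := ⟨k - 1, by omega⟩
  simp only [deco, List.ofFn_succ] at E hr1
  have h0 : (⟨0, hk⟩ : Fin (m + 1)) = 0 := rfl
  rw [h0] at hfirst ⊢
  rw [hfirst] at E hr1
  exact (canc H _ _ _ _ _ _ (Nat.lt_succ_self _) hr1 E).1
end
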